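/- arXiv:1402.4694 — 2 statements merged into one kernel-verified Lean document; each statement's English description precedes it below -/
import Mathlib

section
/- Let α ∈ (0,π), γ ∈ [0,π/2], and B = (sin γ·cos(α/2), sin γ·sin(α/2), cos γ). Then the band function τ ↦ s(B;α,τ) attains its infimum: there exists τ* ∈ ℝ such that s(B;α,τ*) = inf_{τ∈ℝ} s(B;α,τ). -/
open Real MeasureTheory Set Filter

noncomputable section

namespace MagWedge

/-- The infinite sector `S_α := {(x₁,x₂) : |x₂| ≤ x₁·tan(α/2)}`. -/
def sector (α : ℝ) : Set (ℝ × ℝ) :=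
  {x | |x.2| ≤ x.1 * Real.tan (α / 2)}

/-- The infinite wedge `W_α := S_α × ℝ` (coordinates `(x₁, x₂, x₃)`). -/
def wedge (α : ℝ) : Set (ℝ × ℝ × ℝ) :=
  {x | |x.2.1| ≤ x.1 * Real.tan (α / 2)}

/-- The upper half-plane `Hp^up := {x₂ < x₁·tan(α/2)}`. -/
def hpUp (α : ℝ) : Set (ℝ × ℝ) :=
  {x | x.2 < x.1 * Real.tan (α / 2)}

/-- The lower half-plane `Hp^low := {x₂ > −x₁·tan(α/2)}`. -/
def hpLow (α : ℝ) : Set (ℝ × ℝ) :=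
  {x | -(x.1 * Real.tan (α / 2)) < x.2}

/-- The magnetic/electric energy of `u` on a planar domain `Ω`, for magnetic field
`(b₁,b₂,b₃)` (gauge `A̲ = (−x₂ b₃, 0)`) and Fourier parameter `τ`. -/
def energy2D (Ω : Set (ℝ × ℝ)) (b1 b2 b3 τ : ℝ) (u : ℝ × ℝ → ℂ) : ℝ :=
  ∫ x in Ω,
    ‖(-Complex.I) * fderiv ℝ u x (1, 0) + ((x.2 * b3 : ℝ) : ℂ) * u x‖ ^ 2
      + ‖fderiv ℝ u x (0, 1)‖ ^ 2
      + (x.1 * b2 - x.2 * b1 - τ) ^ 2 * ‖u x‖ ^ 2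

/-- The squared `L²`-norm of `u` on a planar domain `Ω`. -/
def norm2D (Ω : Set (ℝ × ℝ)) (u : ℝ × ℝ → ℂ) : ℝ := ∫ x in Ω, ‖u x‖ ^ 2

/-- The bottom of the spectrum of the Neumann realization of
`(−i∇−A̲)² + (x₁b₂−x₂b₁−τ)²` on `Ω`, via the Rayleigh quotient. -/
def specInf2D (Ω : Set (ℝ × ℝ)) (b1 b2 b3 τ : ℝ) : ℝ :=
  sInf { r : ℝ | ∃ u : ℝ × ℝ → ℂ, ContDiff ℝ (⊤ : ℕ∞) u ∧ HasCompactSupport u ∧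
    0 < norm2D Ω u ∧ r = energy2D Ω b1 b2 b3 τ u / norm2D Ω u }

/-- The band function `s(B;α,τ)` on the sector `S_α`. -/
def bandFn (α b1 b2 b3 τ : ℝ) : ℝ := specInf2D (sector α) b1 b2 b3 τ

/-- `Σ(B;α,τ,R)` : the Rayleigh quotient infimum over functions supported outside the
(closed Euclidean) ball of radius `R` centered at the origin. -/
def SigmaR (α b1 b2 b3 τ R : ℝ) : ℝ :=
  sInf { r : ℝ | ∃ u : ℝ × ℝ → ℂ, ContDiff ℝ (⊤ : ℕ∞) u ∧ HasCompactSupport u ∧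
    (tsupport u ⊆ {x : ℝ × ℝ | R ^ 2 < x.1 ^ 2 + x.2 ^ 2}) ∧
    0 < norm2D (sector α) u ∧
    r = energy2D (sector α) b1 b2 b3 τ u / norm2D (sector α) u }

/-- The bottom of the essential spectrum via Persson's characterization:
`s_ess(B;α,τ) = sup_{R>0} Σ(B;α,τ,R)`. -/
def sEss (α b1 b2 b3 τ : ℝ) : ℝ :=
  sSup { r : ℝ | ∃ R > (0 : ℝ), r = SigmaR α b1 b2 b3 τ R }

/-- The 3D magnetic energy on a domain `Ω ⊆ ℝ³` for the constant field `(b₁,b₂,b₃)`,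
in the gauge `A = (−x₂b₃, 0, x₂b₁ − x₁b₂)`. -/
def energy3D (Ω : Set (ℝ × ℝ × ℝ)) (b1 b2 b3 : ℝ) (u : ℝ × ℝ × ℝ → ℂ) : ℝ :=
  ∫ x in Ω,
    ‖(-Complex.I) * fderiv ℝ u x (1, 0, 0) + ((x.2.1 * b3 : ℝ) : ℂ) * u x‖ ^ 2
      + ‖fderiv ℝ u x (0, 1, 0)‖ ^ 2
      + ‖(-Complex.I) * fderiv ℝ u x (0, 0, 1) - ((x.2.1 * b1 : ℝ) : ℂ) * u x
          + ((x.1 * b2 : ℝ) : ℂ) * u x‖ ^ 2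

/-- The squared `L²`-norm of `u` on a domain `Ω ⊆ ℝ³`. -/
def norm3D (Ω : Set (ℝ × ℝ × ℝ)) (u : ℝ × ℝ × ℝ → ℂ) : ℝ := ∫ x in Ω, ‖u x‖ ^ 2

/-- `λ(B;W_α)` : the bottom of the spectrum of the Neumann magnetic Laplacian on the
wedge `W_α` with constant magnetic field `B = (b₁,b₂,b₃)`. -/
def lambdaWedge (α b1 b2 b3 : ℝ) : ℝ :=
  sInf { r : ℝ | ∃ u : ℝ × ℝ × ℝ → ℂ, ContDiff ℝ (⊤ : ℕ∞) u ∧ HasCompactSupport u ∧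
    0 < norm3D (wedge α) u ∧ r = energy3D (wedge α) b1 b2 b3 u / norm3D (wedge α) u }

/-- The de Gennes function `μ₁(ξ)`: bottom of the spectrum of the Neumann realization of
`−d²/dt² + (t−ξ)²` on the half-line. -/
def deGennes (ξ : ℝ) : ℝ :=
  sInf { r : ℝ | ∃ u : ℝ → ℂ, ContDiff ℝ (⊤ : ℕ∞) u ∧ HasCompactSupport u ∧
    (0 < ∫ t in Ioi (0 : ℝ), ‖u t‖ ^ 2) ∧
    r = (∫ t in Ioi (0 : ℝ), ‖deriv u t‖ ^ 2 + (t - ξ) ^ 2 * ‖u t‖ ^ 2) /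
        (∫ t in Ioi (0 : ℝ), ‖u t‖ ^ 2) }

/-- `Θ₀ := inf_ξ μ₁(ξ)`. -/
def Theta0 : ℝ := ⨅ ξ : ℝ, deGennes ξ

/-- The half-space `{(s,t,z) : t > 0}` in ℝ³. -/
def halfSpace3 : Set (ℝ × ℝ × ℝ) := {x | 0 < x.2.1}

/-- `σ(θ)` : the bottom of the spectrum of the Neumann magnetic Laplacian on the half-space
with a unit magnetic field making angle `θ` with the boundary. -/
def sigmaHS (θ : ℝ) : ℝ :=
  sInf { r : ℝ | ∃ u : ℝ × ℝ × ℝ → ℂ, ContDiff ℝ (⊤ : ℕ∞) u ∧ HasCompactSupport u ∧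
    (0 < ∫ x in halfSpace3, ‖u x‖ ^ 2) ∧
    r = (∫ x in halfSpace3,
          ‖fderiv ℝ u x (1, 0, 0)‖ ^ 2 + ‖fderiv ℝ u x (0, 1, 0)‖ ^ 2
            + ‖(-Complex.I) * fderiv ℝ u x (0, 0, 1)
                - ((x.2.1 * Real.cos θ : ℝ) : ℂ) * u x
                + ((x.1 * Real.sin θ : ℝ) : ℂ) * u x‖ ^ 2) /
        (∫ x in halfSpace3, ‖u x‖ ^ 2) }

/-- `μ(α)` : the bottom of the spectrum of the magnetic Neumann Laplacian on the sector
`S_α` with unit constant (scalar) magnetic field. -/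
def muSector (α : ℝ) : ℝ :=
  sInf { r : ℝ | ∃ u : ℝ × ℝ → ℂ, ContDiff ℝ (⊤ : ℕ∞) u ∧ HasCompactSupport u ∧
    0 < norm2D (sector α) u ∧
    r = (∫ x in sector α,
          ‖(-Complex.I) * fderiv ℝ u x (1, 0) + (x.2 : ℂ) * u x‖ ^ 2
            + ‖fderiv ℝ u x (0, 1)‖ ^ 2) / norm2D (sector α) u }

end MagWedge

/-!
By the reflection `B ↦ -B`, `τ ↦ -τ` one may take `B = (σ cos (α / 2), σ sin (α / 2), b)` with
`σ ≥ 0`; for `σ = 0` the potential is `τ²` and the minimum is at `τ = 0`. Let `σ > 0`. Such a field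
is tangent to the upper face of the sector, and the potential `(σ d(x) - τ)²` depends only on the
distance `d` from that face.

* `s(τ) - τ²` is an infimum of affine functions of `τ`, hence concave, so `s` is continuous.
* `d ≥ 0` on the sector gives `s(τ) ≥ τ²` for `τ ≤ 0`.
* Modulated products of a de Gennes trial function with a plane wave along the upper face, far from
  the corner, give `inf s ≤ Θ₀`.
* As `τ → +∞`, IMS localization splits a function into a part with `d(x) ≤ τ / (2 σ)`, where the
  potential is at least `τ² / 4`, and a part away from the upper face, which only sees the lower
  one. The half-plane bound `cos² θ Θ₀ + sin² θ`, `θ` being the angle between the field and the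
  face, applies to the latter; since `sin θ = σ sin α > 0` and `Θ₀ < 1`, it exceeds `Θ₀`.

So `s` stays above a constant larger than some of its values outside a compact interval. The
half-plane bound follows from a pointwise inequality, up to an exact derivative along the boundary,
and from a Fourier transform along the boundary, which reduces it to the de Gennes operators.
-/

namespace MagWedge

section TestFunctions

variable {E E' F : Type*} [NormedAddCommGroup E] [NormedSpace ℝ E] [NormedAddCommGroup E']
  [NormedSpace ℝ E'] [NormedAddCommGroup F] [NormedSpace ℝ F]

/-- Smooth compactly supported functions, the admissible functions of all Rayleigh quotients. -/
structure IsTestFunction (u : E → F) : Prop where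
  contDiff : ContDiff ℝ (⊤ : ℕ∞) u
  hasCompactSupport : HasCompactSupport u

namespace IsTestFunction

variable {u : E → F}

lemma continuous (hu : IsTestFunction u) : Continuous u := hu.contDiff.continuous

lemma differentiable (hu : IsTestFunction u) : Differentiable ℝ u :=
  hu.contDiff.differentiable (by simp)

lemma fderiv_apply (hu : IsTestFunction u) (v : E) : IsTestFunction fun x ↦ fderiv ℝ u x v where
  contDiff := (hu.contDiff.fderiv_right le_rfl).clm_apply contDiff_const
  hasCompactSupport := hu.hasCompactSupport.fderiv_apply ℝ v

lemma deriv {f : ℝ → F} (hf : IsTestFunction f) : IsTestFunction (deriv f) :=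
  hf.fderiv_apply 1

lemma add {v : E → F} (hu : IsTestFunction u) (hv : IsTestFunction v) :
    IsTestFunction fun x ↦ u x + v x where
  contDiff := hu.contDiff.add hv.contDiff
  hasCompactSupport := hu.hasCompactSupport.add hv.hasCompactSupport

lemma mul_left {A : Type*} [NormedRing A] [NormedAlgebra ℝ A] {f u : E → A}
    (hu : IsTestFunction u) (hf : ContDiff ℝ (⊤ : ℕ∞) f) : IsTestFunction fun x ↦ f x * u x where
  contDiff := hf.mul hu.contDiff
  hasCompactSupport := hu.hasCompactSupport.mul_left

lemma ofReal_mul {f : E → ℝ} {u : E → ℂ} (hu : IsTestFunction u) (hf : ContDiff ℝ (⊤ : ℕ∞) f) :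
    IsTestFunction fun x ↦ (f x : ℂ) * u x :=
  hu.mul_left (Complex.ofRealCLM.contDiff.comp hf)

lemma cexp_mul {φ : E → ℝ} {u : E → ℂ} (hu : IsTestFunction u) (hφ : ContDiff ℝ (⊤ : ℕ∞) φ) :
    IsTestFunction fun x ↦ Complex.exp (φ x * Complex.I) * u x :=
  hu.mul_left ((Complex.ofRealCLM.contDiff.comp hφ).mul contDiff_const).cexp

lemma ofReal {f : E → ℝ} (hf : IsTestFunction f) : IsTestFunction fun x ↦ (f x : ℂ) where
  contDiff := Complex.ofRealCLM.contDiff.comp hf.contDiff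
  hasCompactSupport := hf.hasCompactSupport.comp_left Complex.ofReal_zero

lemma norm_sq {u : E → ℂ} (hu : IsTestFunction u) : IsTestFunction fun x ↦ ‖u x‖ ^ 2 where
  contDiff := hu.contDiff.norm_sq ℝ
  hasCompactSupport := hu.hasCompactSupport.comp_left (g := fun z : ℂ ↦ ‖z‖ ^ 2) (by simp)

lemma comp_continuousLinearEquiv (hu : IsTestFunction u) (L : E' ≃L[ℝ] E) :
    IsTestFunction fun x ↦ u (L x) where
  contDiff := hu.contDiff.comp L.contDiff
  hasCompactSupport := hu.hasCompactSupport.comp_homeomorph L.toHomeomorph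

lemma comp_mul_left {f : ℝ → F} (hf : IsTestFunction f) {c : ℝ} (hc : c ≠ 0) :
    IsTestFunction fun t ↦ f (c * t) where
  contDiff := hf.contDiff.comp (by fun_prop)
  hasCompactSupport := hf.hasCompactSupport.comp_homeomorph (Homeomorph.mulLeft₀ c hc)

lemma comp_prodMk_left {u : E × E' → F} (hu : IsTestFunction u) (s : E) :
    IsTestFunction fun t ↦ u (s, t) where
  contDiff := hu.contDiff.comp (contDiff_prodMk_right s)
  hasCompactSupport := .intro (hu.hasCompactSupport.isCompact.image continuous_snd) fun t ht ↦
    image_eq_zero_of_notMem_tsupport fun hst ↦ ht ⟨(s, t), hst, rfl⟩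

lemma comp_prodMk_right {u : E × E' → F} (hu : IsTestFunction u) (t : E') :
    IsTestFunction fun s ↦ u (s, t) where
  contDiff := hu.contDiff.comp (contDiff_prodMk_left t)
  hasCompactSupport := .intro (hu.hasCompactSupport.isCompact.image continuous_fst) fun s hs ↦
    image_eq_zero_of_notMem_tsupport fun hst ↦ hs ⟨(s, t), hst, rfl⟩

lemma hasDerivAt_comp_prodMk_left {u : E × ℝ → F} (hu : IsTestFunction u) (s : E) (t : ℝ) :
    HasDerivAt (fun t ↦ u (s, t)) (fderiv ℝ u (s, t) (0, 1)) t :=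
  (hu.differentiable (s, t)).hasFDerivAt.comp_hasDerivAt t
    ((hasDerivAt_const t s).prodMk (hasDerivAt_id t))

lemma hasDerivAt_comp_prodMk_right {u : ℝ × E' → F} (hu : IsTestFunction u) (s : ℝ) (t : E') :
    HasDerivAt (fun s ↦ u (s, t)) (fderiv ℝ u (s, t) (1, 0)) s :=
  (hu.differentiable (s, t)).hasFDerivAt.comp_hasDerivAt s
    ((hasDerivAt_id s).prodMk (hasDerivAt_const s t))

lemma integrable [MeasurableSpace E] [BorelSpace E] {μ : Measure E}
    [IsFiniteMeasureOnCompacts μ] (hu : IsTestFunction u) : Integrable u μ :=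
  hu.continuous.integrable_of_hasCompactSupport hu.hasCompactSupport

end IsTestFunction

end TestFunctions

section MagneticGradient

variable {E E' : Type*} [NormedAddCommGroup E] [NormedSpace ℝ E] [NormedAddCommGroup E']
  [NormedSpace ℝ E'] {A : E → E →L[ℝ] ℝ} {u : E → ℂ} {x : E}

/-- The magnetic gradient `(-i∇ + A) u` at `x`, as a linear form, for the potential given by the
one-form `A`. -/
def magGrad (A : E → E →L[ℝ] ℝ) (u : E → ℂ) (x : E) : E →L[ℝ] ℂ :=
  (-Complex.I) • fderiv ℝ u x + u x • Complex.ofRealCLM.comp (A x)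

lemma magGrad_apply (A : E → E →L[ℝ] ℝ) (u : E → ℂ) (x v : E) :
    magGrad A u x v = -Complex.I * fderiv ℝ u x v + A x v * u x := by
  simp [magGrad, mul_comm]

lemma IsTestFunction.magGrad_apply (hu : IsTestFunction u) (hA : ContDiff ℝ (⊤ : ℕ∞) A) (v : E) :
    IsTestFunction fun x ↦ magGrad A u x v := by
  simp only [MagWedge.magGrad_apply]
  exact ((hu.fderiv_apply v).mul_left contDiff_const).add
    (hu.ofReal_mul (hA.clm_apply contDiff_const))

lemma hasFDerivAt_ofReal_comp {φ : E → ℝ} (hφ : DifferentiableAt ℝ φ x) :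
    HasFDerivAt (fun y ↦ (φ y : ℂ)) (Complex.ofRealCLM.comp (fderiv ℝ φ x)) x :=
  Complex.ofRealCLM.hasFDerivAt.comp x hφ.hasFDerivAt

lemma magGrad_cexp_mul {φ : E → ℝ} (hφ : DifferentiableAt ℝ φ x) (hu : DifferentiableAt ℝ u x) :
    magGrad A (fun y ↦ Complex.exp (φ y * Complex.I) * u y) x =
      Complex.exp (φ x * Complex.I) • magGrad (fun y ↦ A y + fderiv ℝ φ y) u x := by
  have h := (((hasFDerivAt_ofReal_comp hφ).mul_const Complex.I).cexp.fun_mul hu.hasFDerivAt).fderiv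
  ext v
  simp [magGrad_apply, h]
  linear_combination (-Complex.exp (φ x * Complex.I) * fderiv ℝ φ x v * u x) * Complex.I_sq

lemma magGrad_comp_continuousLinearMap (L : E' →L[ℝ] E) {x : E'}
    (hu : DifferentiableAt ℝ u (L x)) :
    magGrad (fun y ↦ (A (L y)).comp L) (fun y ↦ u (L y)) x = (magGrad A u (L x)).comp L := by
  have h := (hu.hasFDerivAt.comp x L.hasFDerivAt).fderiv
  ext v
  simp only [Function.comp_def] at h
  simp [magGrad_apply, h]

lemma magGrad_ofReal_mul {f : E → ℝ} (hf : DifferentiableAt ℝ f x) (hu : DifferentiableAt ℝ u x)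
    (v : E) : magGrad A (fun y ↦ f y * u y) x v =
      f x * magGrad A u x v - Complex.I * fderiv ℝ f x v * u x := by
  have h := ((hasFDerivAt_ofReal_comp hf).fun_mul hu.hasFDerivAt).fderiv
  simp [magGrad_apply, h]
  ring

lemma norm_sq_add_norm_sq_of_sq_add_sq_eq_one {c d : ℝ} (h : c ^ 2 + d ^ 2 = 1) (z w : ℂ) :
    ‖c * z + d * w‖ ^ 2 + ‖d * z - c * w‖ ^ 2 = ‖z‖ ^ 2 + ‖w‖ ^ 2 := by
  simp only [← Complex.normSq_eq_norm_sq, Complex.normSq_apply, Complex.add_re, Complex.add_im,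
    Complex.sub_re, Complex.sub_im, Complex.re_ofReal_mul, Complex.im_ofReal_mul]
  linear_combination (z.re ^ 2 + z.im ^ 2 + w.re ^ 2 + w.im ^ 2) * h

/-- The IMS localization identity for the partition of unity `cos² θ + sin² θ = 1`. -/
lemma norm_magGrad_cos_sq_add_norm_magGrad_sin_sq {θ : E → ℝ} (hθ : DifferentiableAt ℝ θ x)
    (hu : DifferentiableAt ℝ u x) (v : E) :
    ‖magGrad A (fun y ↦ (cos (θ y) : ℝ) * u y) x v‖ ^ 2 +
        ‖magGrad A (fun y ↦ (sin (θ y) : ℝ) * u y) x v‖ ^ 2 =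
      ‖magGrad A u x v‖ ^ 2 + (fderiv ℝ θ x v) ^ 2 * ‖u x‖ ^ 2 := by
  set w := Complex.I * fderiv ℝ θ x v * u x with hw
  have hcos : magGrad A (fun y ↦ (cos (θ y) : ℝ) * u y) x v =
      (cos (θ x) : ℝ) * magGrad A u x v + (sin (θ x) : ℝ) * w := by
    rw [magGrad_ofReal_mul hθ.cos hu, hθ.hasFDerivAt.cos.fderiv, hw]
    simp
    ring
  have hsin : magGrad A (fun y ↦ (sin (θ y) : ℝ) * u y) x v =
      (sin (θ x) : ℝ) * magGrad A u x v - (cos (θ x) : ℝ) * w := by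
    rw [magGrad_ofReal_mul hθ.sin hu, hθ.hasFDerivAt.sin.fderiv, hw]
    simp
    ring
  rw [hcos, hsin, norm_sq_add_norm_sq_of_sq_add_sq_eq_one (cos_sq_add_sin_sq _), hw]
  simp [mul_pow]

end MagneticGradient

section PlanarEnergy

/-- The one-form `x₂ b dx₁` added to `-i∇` in `energy2D`, for the planar field component `b`. -/
def planarPotential (b : ℝ) (x : ℝ × ℝ) : ℝ × ℝ →L[ℝ] ℝ :=
  (x.2 * b) • ContinuousLinearMap.fst ℝ ℝ ℝ

/-- The integrand of `energy2D`, written with the magnetic gradient. -/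
def energyDensity (b1 b2 b3 τ : ℝ) (u : ℝ × ℝ → ℂ) (x : ℝ × ℝ) : ℝ :=
  ‖magGrad (planarPotential b3) u x (1, 0)‖ ^ 2 + ‖magGrad (planarPotential b3) u x (0, 1)‖ ^ 2 +
    (x.1 * b2 - x.2 * b1 - τ) ^ 2 * ‖u x‖ ^ 2

variable {Ω : Set (ℝ × ℝ)} {b1 b2 b3 τ : ℝ} {u : ℝ × ℝ → ℂ} {x : ℝ × ℝ}

lemma contDiff_planarPotential (b : ℝ) : ContDiff ℝ (⊤ : ℕ∞) (planarPotential b) :=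
  (contDiff_snd.mul contDiff_const).smul contDiff_const

lemma magGrad_planarPotential_apply_fst (b : ℝ) (u : ℝ × ℝ → ℂ) (x : ℝ × ℝ) :
    magGrad (planarPotential b) u x (1, 0) =
      -Complex.I * fderiv ℝ u x (1, 0) + ((x.2 * b : ℝ) : ℂ) * u x := by
  simp [magGrad_apply, planarPotential]

lemma magGrad_planarPotential_apply_snd (b : ℝ) (u : ℝ × ℝ → ℂ) (x : ℝ × ℝ) :
    magGrad (planarPotential b) u x (0, 1) = -Complex.I * fderiv ℝ u x (0, 1) := by
  simp [magGrad_apply, planarPotential]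

lemma energy2D_eq_setIntegral_energyDensity (Ω : Set (ℝ × ℝ)) (b1 b2 b3 τ : ℝ) (u : ℝ × ℝ → ℂ) :
    energy2D Ω b1 b2 b3 τ u = ∫ x in Ω, energyDensity b1 b2 b3 τ u x := by
  simp [energy2D, energyDensity, magGrad_planarPotential_apply_fst,
    magGrad_planarPotential_apply_snd]

lemma energyDensity_nonneg : 0 ≤ energyDensity b1 b2 b3 τ u x := by
  unfold energyDensity
  positivity

lemma energyDensity_of_notMem_tsupport (hx : x ∉ tsupport u) :
    energyDensity b1 b2 b3 τ u x = 0 := by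
  simp [energyDensity, magGrad_apply, fderiv_of_notMem_tsupport ℝ hx,
    image_eq_zero_of_notMem_tsupport hx]

lemma energy2D_nonneg : 0 ≤ energy2D Ω b1 b2 b3 τ u := by
  rw [energy2D_eq_setIntegral_energyDensity]
  exact integral_nonneg fun _ ↦ energyDensity_nonneg

lemma norm2D_nonneg : 0 ≤ norm2D Ω u := integral_nonneg fun _ ↦ by positivity

lemma IsTestFunction.integrable_energyDensity (hu : IsTestFunction u) (b1 b2 b3 τ : ℝ) :
    Integrable (energyDensity b1 b2 b3 τ u) := by
  have hgrad (v : ℝ × ℝ) := (hu.magGrad_apply (contDiff_planarPotential b3) v).norm_sq.integrable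
    (μ := volume)
  exact ((hgrad _).add (hgrad _)).add (hu.norm_sq.mul_left (by fun_prop)).integrable

end PlanarEnergy

section HalfLine

/-- The energy whose Rayleigh quotient defines `deGennes ξ`. -/
def halfLineEnergy (ξ : ℝ) (f : ℝ → ℂ) : ℝ :=
  ∫ t in Ioi (0 : ℝ), ‖deriv f t‖ ^ 2 + (t - ξ) ^ 2 * ‖f t‖ ^ 2

/-- The squared `L²`-norm of `f` on the half-line. -/
def halfLineNorm (f : ℝ → ℂ) : ℝ := ∫ t in Ioi (0 : ℝ), ‖f t‖ ^ 2

variable {ξ : ℝ} {f : ℝ → ℂ}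

lemma halfLineEnergy_nonneg : 0 ≤ halfLineEnergy ξ f := integral_nonneg fun _ ↦ by positivity

lemma halfLineNorm_nonneg : 0 ≤ halfLineNorm f := integral_nonneg fun _ ↦ by positivity

lemma deGennes_nonneg (ξ : ℝ) : 0 ≤ deGennes ξ := by
  refine Real.sInf_nonneg ?_
  rintro _ ⟨f, -, -, -, rfl⟩
  exact div_nonneg halfLineEnergy_nonneg halfLineNorm_nonneg

lemma deGennes_le_div (hf : IsTestFunction f) (hpos : 0 < halfLineNorm f) :
    deGennes ξ ≤ halfLineEnergy ξ f / halfLineNorm f := by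
  refine csInf_le ⟨0, ?_⟩ ⟨f, hf.contDiff, hf.hasCompactSupport, hpos, rfl⟩
  rintro _ ⟨f, -, -, -, rfl⟩
  exact div_nonneg halfLineEnergy_nonneg halfLineNorm_nonneg

lemma Theta0_le_deGennes (ξ : ℝ) : Theta0 ≤ deGennes ξ :=
  ciInf_le ⟨0, forall_mem_range.2 deGennes_nonneg⟩ ξ

lemma Theta0_mul_halfLineNorm_le (ξ : ℝ) (hf : IsTestFunction f) :
    Theta0 * halfLineNorm f ≤ halfLineEnergy ξ f := by
  rcases halfLineNorm_nonneg.eq_or_lt with h | h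
  · rw [← h, mul_zero]
    exact halfLineEnergy_nonneg
  · rw [← le_div_iff₀ h]
    exact (Theta0_le_deGennes ξ).trans (deGennes_le_div hf h)

/-- Obtained from the inequality for `deGennes` by the dilation `t ↦ √R t`. -/
lemma mul_Theta0_mul_halfLineNorm_le {R : ℝ} (hR : 0 ≤ R) (η : ℝ) (hf : IsTestFunction f) :
    R * Theta0 * halfLineNorm f ≤
      ∫ t in Ioi (0 : ℝ), ‖deriv f t‖ ^ 2 + (R * t + η) ^ 2 * ‖f t‖ ^ 2 := by
  rcases hR.eq_or_lt with rfl | hR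
  · rw [zero_mul, zero_mul]
    exact integral_nonneg fun _ ↦ by positivity
  obtain ⟨c, hc, rfl⟩ : ∃ c, 0 < c ∧ c ^ 2 = R := ⟨√R, Real.sqrt_pos.2 hR, Real.sq_sqrt hR.le⟩
  have hdilate : IsTestFunction fun t ↦ f (c⁻¹ * t) := hf.comp_mul_left (inv_ne_zero hc.ne')
  have hnorm : halfLineNorm (fun t ↦ f (c⁻¹ * t)) = c * halfLineNorm f := by
    simpa [halfLineNorm] using
      integral_comp_mul_left_Ioi (fun t ↦ ‖f t‖ ^ 2) 0 (inv_pos.2 hc)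
  have henergy : halfLineEnergy (-η / c) (fun t ↦ f (c⁻¹ * t)) =
      c⁻¹ * ∫ t in Ioi (0 : ℝ), ‖deriv f t‖ ^ 2 + (c ^ 2 * t + η) ^ 2 * ‖f t‖ ^ 2 := by
    have h := integral_comp_mul_left_Ioi
      (fun t ↦ ‖deriv f t‖ ^ 2 + (c ^ 2 * t + η) ^ 2 * ‖f t‖ ^ 2) 0 (inv_pos.2 hc)
    rw [mul_zero, inv_inv, smul_eq_mul] at h
    rw [eq_inv_mul_iff_mul_eq₀ hc.ne', ← mul_right_inj' hc.ne', ← h, ← mul_assoc,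
      halfLineEnergy, ← integral_const_mul]
    congr 1 with t
    rw [deriv_comp_mul_left, norm_smul, Real.norm_of_nonneg (by positivity)]
    field_simp
    ring
  have key := Theta0_mul_halfLineNorm_le (-η / c) hdilate
  rw [hnorm, henergy, ← mul_le_mul_iff_right₀ hc, mul_inv_cancel_left₀ hc.ne'] at key
  linarith

end HalfLine

section ThetaLtOne

open scoped Topology

lemma hasDerivAt_exp_neg_sq (t : ℝ) :
    HasDerivAt (fun t : ℝ ↦ exp (-t ^ 2)) (-(2 * t) * exp (-t ^ 2)) t := by
  simpa [mul_comm] using ((hasDerivAt_pow 2 t).fun_neg).exp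

lemma integral_Ioi_one_sub_two_mul_mul_exp_neg_sq :
    ∫ t in Ioi (0 : ℝ), (1 - 2 * t) * exp (-t ^ 2) = √π / 2 - 1 := by
  have hgauss : ∫ t in Ioi (0 : ℝ), exp (-t ^ 2) = √π / 2 := by
    simpa using integral_gaussian_Ioi 1
  have hint : Integrable fun t : ℝ ↦ exp (-t ^ 2) := by
    simpa using integrable_exp_neg_mul_sq one_pos
  have hint' : Integrable fun t : ℝ ↦ -(2 * t) * exp (-t ^ 2) := by
    simpa [mul_assoc] using (integrable_mul_exp_neg_mul_sq one_pos).const_mul (-2)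
  have hexact : ∫ t in Ioi (0 : ℝ), -(2 * t) * exp (-t ^ 2) = -1 := by
    have h := integral_Ioi_of_hasDerivAt_of_tendsto' (a := 0)
      (fun t _ ↦ hasDerivAt_exp_neg_sq t) hint'.integrableOn
      (tendsto_exp_neg_atTop_nhds_zero.comp (tendsto_pow_atTop two_ne_zero))
    simpa using h
  calc ∫ t in Ioi (0 : ℝ), (1 - 2 * t) * exp (-t ^ 2)
    _ = ∫ t in Ioi (0 : ℝ), exp (-t ^ 2) + -(2 * t) * exp (-t ^ 2) := by
      congr 1 with t
      ring
    _ = √π / 2 - 1 := by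
      rw [integral_add hint.integrableOn hint'.integrableOn, hgauss, hexact, sub_eq_add_neg]

/-- The cut-off Gaussian `χ(t) exp (-t² / 2)`, a trial function for `deGennes`. -/
def truncatedGaussian (χ : ℝ → ℝ) (t : ℝ) : ℂ := (χ t * exp (-t ^ 2 / 2) : ℝ)

variable {χ : ℝ → ℝ}

lemma IsTestFunction.truncatedGaussian (hχ : IsTestFunction χ) :
    IsTestFunction (truncatedGaussian χ) := by
  have h := hχ.mul_left (f := fun t ↦ exp (-t ^ 2 / 2)) (by fun_prop)
  simp only [mul_comm] at h
  exact h.ofReal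

lemma truncatedGaussian_density (hχ : Differentiable ℝ χ) (t : ℝ) :
    ‖deriv (truncatedGaussian χ) t‖ ^ 2 + (t - 1) ^ 2 * ‖truncatedGaussian χ t‖ ^ 2 -
        ‖truncatedGaussian χ t‖ ^ 2 =
      ((deriv χ t - t * χ t) ^ 2 + (t ^ 2 - 2 * t) * χ t ^ 2) * exp (-t ^ 2) := by
  have hsq : exp (-t ^ 2 / 2) ^ 2 = exp (-t ^ 2) := by
    rw [← exp_nat_mul]
    ring_nf
  have hexp : HasDerivAt (fun t ↦ exp (-t ^ 2 / 2)) (exp (-t ^ 2 / 2) * (-(2 * t) / 2)) t := by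
    simpa using (((hasDerivAt_pow 2 t).fun_neg).div_const 2).exp
  have hderiv : deriv (truncatedGaussian χ) t =
      ((deriv χ t * exp (-t ^ 2 / 2) + χ t * (exp (-t ^ 2 / 2) * (-(2 * t) / 2)) : ℝ) : ℂ) :=
    ((hχ t).hasDerivAt.fun_mul hexp).ofReal_comp.deriv
  rw [hderiv, truncatedGaussian]
  simp only [Complex.norm_real, norm_eq_abs, sq_abs, ← hsq]
  ring

/-- The two integrands differ by the derivative of `-t χ² exp (-t²)`, which integrates to `0`. -/
lemma halfLineEnergy_sub_halfLineNorm_truncatedGaussian (hχ : IsTestFunction χ) :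
    halfLineEnergy 1 (truncatedGaussian χ) - halfLineNorm (truncatedGaussian χ) =
      ∫ t in Ioi (0 : ℝ), (deriv χ t ^ 2 + (1 - 2 * t) * χ t ^ 2) * exp (-t ^ 2) := by
  have hf := hχ.truncatedGaussian
  have hf_sq := hf.norm_sq
  set k : ℝ → ℝ := fun t ↦ -t * exp (-t ^ 2) * χ t * χ t with hk_def
  have hk : IsTestFunction k :=
    hχ.mul_left (by have := hχ.contDiff; fun_prop)
  have hk_deriv (t : ℝ) : deriv k t =
      (2 * t ^ 2 * χ t ^ 2 - χ t ^ 2 - 2 * t * χ t * deriv χ t) * exp (-t ^ 2) := by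
    have hχ' := (hχ.differentiable t).hasDerivAt
    rw [((((hasDerivAt_id' t).fun_neg.fun_mul (hasDerivAt_exp_neg_sq t)).fun_mul hχ').fun_mul
      hχ').deriv]
    ring
  have hk_zero : ∫ t in Ioi (0 : ℝ), deriv k t = 0 := by
    rw [hk.hasCompactSupport.integral_Ioi_deriv_eq (hk.contDiff.of_le (by simp))]
    simp [hk_def]
  have hint : Integrable fun t ↦ ‖deriv (truncatedGaussian χ) t‖ ^ 2 +
      (t - 1) ^ 2 * ‖truncatedGaussian χ t‖ ^ 2 :=
    (hf.deriv.norm_sq.add (hf_sq.mul_left (by fun_prop))).integrable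
  have hdensity (t : ℝ) : (deriv χ t ^ 2 + (1 - 2 * t) * χ t ^ 2) * exp (-t ^ 2) =
      ‖deriv (truncatedGaussian χ) t‖ ^ 2 + (t - 1) ^ 2 * ‖truncatedGaussian χ t‖ ^ 2 -
        ‖truncatedGaussian χ t‖ ^ 2 - deriv k t := by
    rw [truncatedGaussian_density hχ.differentiable, hk_deriv]
    ring
  simp only [hdensity]
  rw [integral_sub (hint.sub' hf_sq.integrable).integrableOn hk.deriv.integrable.integrableOn,
    integral_sub hint.integrableOn hf_sq.integrable.integrableOn, hk_zero, sub_zero]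
  rfl

lemma abs_gaussian_defect_le {c d K M : ℝ} (t : ℝ) (hd : |d| ≤ M) (hc : |c| ≤ K) :
    |(d ^ 2 + (1 - 2 * t) * c ^ 2) * exp (-t ^ 2)| ≤
      M ^ 2 * exp (-t ^ 2) + (exp (-t ^ 2) + 2 * |t * exp (-t ^ 2)|) * K ^ 2 := by
  have hd_sq : d ^ 2 ≤ M ^ 2 := sq_le_sq.2 (hd.trans (le_abs_self M))
  have hc_sq : c ^ 2 ≤ K ^ 2 := sq_le_sq.2 (hc.trans (le_abs_self K))
  have hlin : |1 - 2 * t| ≤ 1 + 2 * |t| := by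
    simpa [abs_mul] using abs_sub 1 (2 * t)
  calc |(d ^ 2 + (1 - 2 * t) * c ^ 2) * exp (-t ^ 2)|
    _ ≤ (d ^ 2 + |1 - 2 * t| * c ^ 2) * exp (-t ^ 2) := by
      rw [abs_mul, abs_exp]
      gcongr
      exact (abs_add_le _ _).trans_eq (by rw [abs_sq, abs_mul, abs_sq])
    _ ≤ (M ^ 2 + (1 + 2 * |t|) * K ^ 2) * exp (-t ^ 2) := by gcongr
    _ = M ^ 2 * exp (-t ^ 2) + (exp (-t ^ 2) + 2 * |t * exp (-t ^ 2)|) * K ^ 2 := by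
      rw [abs_mul, abs_exp]
      ring

lemma tendsto_integral_dilated_gaussian_defect (hχ : IsTestFunction χ) :
    Tendsto (fun n : ℕ ↦ ∫ t in Ioi (0 : ℝ), (deriv (fun t ↦ χ (((n : ℝ) + 1)⁻¹ * t)) t ^ 2 +
        (1 - 2 * t) * χ (((n : ℝ) + 1)⁻¹ * t) ^ 2) * exp (-t ^ 2))
      atTop (𝓝 (∫ t in Ioi (0 : ℝ), (1 - 2 * t) * χ 0 ^ 2 * exp (-t ^ 2))) := by
  obtain ⟨M, hM⟩ := hχ.deriv.continuous.bounded_above_of_compact_support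
    hχ.deriv.hasCompactSupport
  obtain ⟨K, hK⟩ := hχ.continuous.bounded_above_of_compact_support hχ.hasCompactSupport
  have hdil : Tendsto (fun n : ℕ ↦ ((n : ℝ) + 1)⁻¹) atTop (𝓝 0) := by
    simpa using tendsto_one_div_add_atTop_nhds_zero_nat (𝕜 := ℝ)
  have hbound : Integrable fun t : ℝ ↦
      M ^ 2 * exp (-t ^ 2) + (exp (-t ^ 2) + 2 * |t * exp (-t ^ 2)|) * K ^ 2 := by
    have hexp : Integrable fun t : ℝ ↦ exp (-t ^ 2) := by
      simpa using integrable_exp_neg_mul_sq one_pos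
    have hmul : Integrable fun t : ℝ ↦ t * exp (-t ^ 2) := by
      simpa using integrable_mul_exp_neg_mul_sq one_pos
    exact (hexp.const_mul _).add ((hexp.add (hmul.abs.const_mul 2)).mul_const _)
  simp only [deriv_comp_mul_left, smul_eq_mul]
  refine tendsto_integral_of_dominated_convergence _ (fun n ↦ Continuous.aestronglyMeasurable ?_)
    hbound.integrableOn (fun n ↦ ae_of_all _ fun t ↦ abs_gaussian_defect_le t ?_ (hK _))
    (ae_of_all _ fun t ↦ ?_)
  · have := hχ.continuous
    have := hχ.deriv.continuous
    fun_prop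
  · have hn : |((n : ℝ) + 1)⁻¹| ≤ 1 := by
      rw [abs_of_nonneg (by positivity)]
      exact inv_le_one_of_one_le₀ (by simp)
    rw [abs_mul]
    exact (mul_le_of_le_one_left (abs_nonneg _) hn).trans (hM _)
  · have hχ_lim : Tendsto (fun n : ℕ ↦ χ (((n : ℝ) + 1)⁻¹ * t)) atTop (𝓝 (χ 0)) :=
      (hχ.continuous.tendsto 0).comp (by simpa using hdil.mul_const t)
    have hχ'_lim : Tendsto (fun n : ℕ ↦ deriv χ (((n : ℝ) + 1)⁻¹ * t)) atTop (𝓝 (deriv χ 0)) :=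
      (hχ.deriv.continuous.tendsto 0).comp (by simpa using hdil.mul_const t)
    simpa using (((hdil.mul hχ'_lim).pow 2).add ((hχ_lim.pow 2).const_mul _)).mul_const _

lemma exists_halfLineEnergy_one_lt_halfLineNorm :
    ∃ f, IsTestFunction f ∧ halfLineEnergy 1 f < halfLineNorm f := by
  let χ : ContDiffBump (0 : ℝ) := ⟨1, 2, one_pos, one_lt_two⟩
  have hχ : IsTestFunction χ := ⟨χ.contDiff, χ.hasCompactSupport⟩
  have hχn (n : ℕ) : IsTestFunction fun t ↦ χ (((n : ℝ) + 1)⁻¹ * t) :=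
    hχ.comp_mul_left (by positivity)
  have hlim := tendsto_integral_dilated_gaussian_defect hχ
  simp only [χ.eventuallyEq_one.eq_of_nhds, Pi.one_apply, one_pow, mul_one,
    integral_Ioi_one_sub_two_mul_mul_exp_neg_sq] at hlim
  have hpos_gg : √π / 2 - 1 < 0 := by
    have : √π < 2 := (Real.sqrt_lt' two_pos).2 (by linarith [pi_lt_four])
    linarith
  obtain ⟨n, hn⟩ := (hlim.eventually_lt_const hpos_gg).exists
  rw [← halfLineEnergy_sub_halfLineNorm_truncatedGaussian (hχn n), sub_neg] at hn
  exact ⟨_, (hχn n).truncatedGaussian, hn⟩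

lemma Theta0_lt_one : Theta0 < 1 := by
  obtain ⟨f, hf, hlt⟩ := exists_halfLineEnergy_one_lt_halfLineNorm
  have hpos : 0 < halfLineNorm f := halfLineEnergy_nonneg.trans_lt hlt
  calc Theta0 ≤ deGennes 1 := Theta0_le_deGennes 1
    _ ≤ halfLineEnergy 1 f / halfLineNorm f := deGennes_le_div hf hpos
    _ < 1 := (div_lt_one hpos).2 hlt

lemma exists_halfLineEnergy_lt {x : ℝ} (hx : Theta0 < x) :
    ∃ ξ f, IsTestFunction f ∧ 0 < halfLineNorm f ∧ halfLineEnergy ξ f < x * halfLineNorm f := by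
  obtain ⟨ξ, hξ⟩ := exists_lt_of_ciInf_lt hx
  obtain ⟨g, hg, hlt⟩ := exists_halfLineEnergy_one_lt_halfLineNorm
  have hpos_g : 0 < halfLineNorm g := halfLineEnergy_nonneg.trans_lt hlt
  obtain ⟨_, ⟨f, hf, hc, hpos, rfl⟩, hr⟩ := exists_lt_of_csInf_lt
    (by exact ⟨_, g, hg.contDiff, hg.hasCompactSupport, hpos_g, rfl⟩) hξ
  exact ⟨ξ, f, ⟨hf, hc⟩, hpos, (div_lt_iff₀ hpos).1 hr⟩

end ThetaLtOne

open scoped FourierTransform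

section PartialIntegral

variable {E F : Type*} [NormedAddCommGroup E] [NormedSpace ℝ E] [MeasurableSpace E] [BorelSpace E]
  {μ : Measure E} [IsFiniteMeasureOnCompacts μ] [NormedAddCommGroup F] [NormedSpace ℝ F]
  {u : E × ℝ → F}

lemma IsTestFunction.hasDerivAt_integral_left (hu : IsTestFunction u) (t : ℝ) :
    HasDerivAt (fun t ↦ ∫ x, u (x, t) ∂μ) (∫ x, fderiv ℝ u (x, t) (0, 1) ∂μ) t := by
  have hu' := hu.fderiv_apply (0, 1)
  obtain ⟨M, hM⟩ := hu'.continuous.bounded_above_of_compact_support hu'.hasCompactSupport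
  set K : Set E := Prod.fst '' tsupport fun p ↦ fderiv ℝ u p (0, 1)
  have hK : IsCompact K := hu'.hasCompactSupport.isCompact.image continuous_fst
  refine (hasDerivAt_integral_of_dominated_loc_of_deriv_le (bound := K.indicator fun _ ↦ M)
    (F := fun t x ↦ u (x, t)) (F' := fun t x ↦ fderiv ℝ u (x, t) (0, 1))
    univ_mem (.of_forall fun t ↦ (hu.comp_prodMk_right t).integrable.aestronglyMeasurable)
    (hu.comp_prodMk_right t).integrable (hu'.comp_prodMk_right t).integrable.aestronglyMeasurable
    (ae_of_all _ fun x t _ ↦ ?_) ?_ (ae_of_all _ fun x t _ ↦ hu.hasDerivAt_comp_prodMk_left x t)).2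
  · by_cases hx : x ∈ K
    · rw [indicator_of_mem hx]
      exact hM _
    · rw [indicator_of_notMem hx, norm_le_zero_iff]
      exact image_eq_zero_of_notMem_tsupport (f := fun p ↦ fderiv ℝ u p (0, 1))
        fun h ↦ hx ⟨(x, t), h, rfl⟩
  · exact (integrable_indicator_iff hK.measurableSet).2
      (integrableOn_const hK.measure_lt_top.ne)

lemma IsTestFunction.contDiff_integral_left (hu : IsTestFunction u) (n : ℕ) :
    ContDiff ℝ n fun t ↦ ∫ x, u (x, t) ∂μ := by
  induction n generalizing u with
  | zero =>
    exact contDiff_zero.2 (continuous_iff_continuousAt.2 fun t ↦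
      (hu.hasDerivAt_integral_left t).continuousAt)
  | succ n ih =>
    rw [Nat.cast_succ, contDiff_succ_iff_deriv]
    refine ⟨fun t ↦ (hu.hasDerivAt_integral_left t).differentiableAt, by simp, ?_⟩
    rw [funext fun t ↦ (hu.hasDerivAt_integral_left (μ := μ) t).deriv]
    exact ih (hu.fderiv_apply _)

lemma IsTestFunction.integral_left (hu : IsTestFunction u) :
    IsTestFunction fun t ↦ ∫ x, u (x, t) ∂μ where
  contDiff := contDiff_infty.2 hu.contDiff_integral_left
  hasCompactSupport := .intro (hu.hasCompactSupport.isCompact.image continuous_snd) fun t ht ↦ by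
    have (x : E) : u (x, t) = 0 :=
      image_eq_zero_of_notMem_tsupport fun hx ↦ ht ⟨(x, t), hx, rfl⟩
    simp [this]

end PartialIntegral

section PartialFourier

variable {u : ℝ × ℝ → ℂ}

/-- The Fourier transform of `u` in the first variable. -/
def partialFourier (u : ℝ × ℝ → ℂ) (p : ℝ × ℝ) : ℂ := 𝓕 (fun s ↦ u (s, p.2)) p.1

lemma partialFourier_eq_integral (u : ℝ × ℝ → ℂ) (p : ℝ × ℝ) :
    partialFourier u p = ∫ s : ℝ, Complex.exp ((-2 * π * s * p.1 : ℝ) * Complex.I) * u (s, p.2) :=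
  fourier_real_eq_integral_exp_smul _ _

lemma IsTestFunction.partialFourier_integrand (hu : IsTestFunction u) (ξ : ℝ) :
    IsTestFunction fun p : ℝ × ℝ ↦ Complex.exp ((-2 * π * p.1 * ξ : ℝ) * Complex.I) * u p :=
  hu.cexp_mul (by fun_prop)

lemma IsTestFunction.partialFourier_slice (hu : IsTestFunction u) (ξ : ℝ) :
    IsTestFunction fun t ↦ partialFourier u (ξ, t) := by
  simp only [partialFourier_eq_integral]
  exact (hu.partialFourier_integrand ξ).integral_left

lemma deriv_partialFourier (hu : IsTestFunction u) (ξ t : ℝ) :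
    deriv (fun t ↦ partialFourier u (ξ, t)) t =
      partialFourier (fun p ↦ fderiv ℝ u p (0, 1)) (ξ, t) := by
  simp only [partialFourier_eq_integral]
  have hint := hu.partialFourier_integrand ξ
  rw [(hint.hasDerivAt_integral_left t).deriv]
  congr 1 with s
  exact (hint.hasDerivAt_comp_prodMk_left s t).unique
    ((hu.hasDerivAt_comp_prodMk_left s t).const_mul
      (Complex.exp ((-2 * π * s * ξ : ℝ) * Complex.I)))

lemma partialFourier_fderiv_fst (hu : IsTestFunction u) (p : ℝ × ℝ) :
    partialFourier (fun p ↦ fderiv ℝ u p (1, 0)) p =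
      2 * π * Complex.I * p.1 * partialFourier u p := by
  have hslice := hu.comp_prodMk_right p.2
  have h := congrFun (Real.fourier_deriv hslice.integrable hslice.differentiable
    hslice.deriv.integrable) p.1
  rwa [funext fun s ↦ (hu.hasDerivAt_comp_prodMk_right s p.2).deriv] at h

lemma partialFourier_symbol (hu : IsTestFunction u) (b R : ℝ) (p : ℝ × ℝ) :
    partialFourier (fun x ↦ b * (-Complex.I * fderiv ℝ u x (1, 0)) + ((R * x.2 : ℝ) : ℂ) * u x) p =
      ((R * p.2 + 2 * π * b * p.1 : ℝ) : ℂ) * partialFourier u p := by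
  have hint (w : ℝ × ℝ → ℂ) (hw : IsTestFunction w) (c : ℂ) :=
    ((hw.partialFourier_integrand p.1).comp_prodMk_right p.2).integrable (μ := volume)
      |>.const_mul c
  calc _ = -Complex.I * b * partialFourier (fun p ↦ fderiv ℝ u p (1, 0)) p +
        ((R * p.2 : ℝ) : ℂ) * partialFourier u p := by
        simp only [partialFourier_eq_integral]
        rw [← integral_const_mul, ← integral_const_mul,
          ← integral_add (hint _ (hu.fderiv_apply _) _) (hint _ hu _)]
        congr 1 with s
        ring
    _ = _ := by
        rw [partialFourier_fderiv_fst hu]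
        push_cast
        linear_combination (-(b : ℂ) * 2 * π * p.1 * partialFourier u p) * Complex.I_mul_I

variable {ν : Measure ℝ} [IsFiniteMeasureOnCompacts ν] [SFinite ν]

lemma stronglyMeasurable_partialFourier (hu : IsTestFunction u) :
    StronglyMeasurable (partialFourier u) := by
  have hcont := hu.continuous
  rw [funext (partialFourier_eq_integral u)]
  exact (Continuous.stronglyMeasurable (by fun_prop)).integral_prod_right

lemma integral_norm_sq_partialFourier_slice (hu : IsTestFunction u) (t : ℝ) :
    ∫ ξ, ‖partialFourier u (ξ, t)‖ ^ 2 = ∫ s, ‖u (s, t)‖ ^ 2 :=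
  SchwartzMap.integral_norm_sq_fourier
    ((hu.comp_prodMk_right t).hasCompactSupport.toSchwartzMap (hu.comp_prodMk_right t).contDiff)

lemma integrable_norm_sq_partialFourier_slice (hu : IsTestFunction u) (t : ℝ) :
    Integrable fun ξ ↦ ‖partialFourier u (ξ, t)‖ ^ 2 :=
  (SchwartzMap.memLp (𝓕 ((hu.comp_prodMk_right t).hasCompactSupport.toSchwartzMap
    (hu.comp_prodMk_right t).contDiff)) 2 volume).integrable_norm_pow two_ne_zero

lemma integrable_norm_sq_partialFourier (hu : IsTestFunction u) :
    Integrable (fun p ↦ ‖partialFourier u p‖ ^ 2) (volume.prod ν) := by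
  have hmeas : StronglyMeasurable fun p ↦ ‖partialFourier u p‖ ^ 2 :=
    (stronglyMeasurable_partialFourier hu).norm.pow 2
  rw [integrable_prod_iff' hmeas.aestronglyMeasurable]
  refine ⟨ae_of_all _ (integrable_norm_sq_partialFourier_slice hu), ?_⟩
  simp only [norm_pow, norm_norm, integral_norm_sq_partialFourier_slice hu]
  exact hu.norm_sq.integrable.integral_prod_right

lemma integral_norm_sq_partialFourier (hu : IsTestFunction u) :
    ∫ p, ‖partialFourier u p‖ ^ 2 ∂(volume.prod ν) = ∫ p, ‖u p‖ ^ 2 ∂(volume.prod ν) := by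
  rw [integral_prod_symm _ (integrable_norm_sq_partialFourier hu),
    integral_prod_symm _ hu.norm_sq.integrable]
  simp only [integral_norm_sq_partialFourier_slice hu]

end PartialFourier

section HalfPlane

/-- The closed upper half-plane. -/
def halfPlane : Set (ℝ × ℝ) := {y | 0 ≤ y.2}

lemma volume_restrict_halfPlane :
    (volume : Measure (ℝ × ℝ)).restrict halfPlane =
      (volume : Measure ℝ).prod (volume.restrict (Ioi 0)) := by
  have h : halfPlane = univ ×ˢ Ici (0 : ℝ) := by
    ext y
    simp [halfPlane]
  rw [h, Measure.volume_eq_prod, ← Measure.prod_restrict, Measure.restrict_univ,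
    ← restrict_Ioi_eq_restrict_Ici]

lemma measurableSet_halfPlane : MeasurableSet halfPlane :=
  measurableSet_le measurable_const measurable_snd

variable {R : ℝ} {v : ℝ × ℝ → ℂ}

lemma mul_Theta0_mul_setIntegral_le_of_slices (hR : 0 ≤ R) (η : ℝ → ℝ)
    {F F' G : ℝ × ℝ → ℂ} (hF : ∀ s, IsTestFunction fun t ↦ F (s, t))
    (hF' : ∀ s t, deriv (fun t ↦ F (s, t)) t = F' (s, t))
    (hG : ∀ s t, G (s, t) = ((R * t + η s : ℝ) : ℂ) * F (s, t))
    (hFi : IntegrableOn (fun p ↦ ‖F p‖ ^ 2) halfPlane)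
    (hF'i : IntegrableOn (fun p ↦ ‖F' p‖ ^ 2) halfPlane)
    (hGi : IntegrableOn (fun p ↦ ‖G p‖ ^ 2) halfPlane) :
    R * Theta0 * ∫ p in halfPlane, ‖F p‖ ^ 2 ≤ ∫ p in halfPlane, ‖F' p‖ ^ 2 + ‖G p‖ ^ 2 := by
  have hsum : IntegrableOn (fun p ↦ ‖F' p‖ ^ 2 + ‖G p‖ ^ 2) halfPlane := hF'i.add hGi
  have hFi' := hFi.const_mul (R * Theta0)
  rw [← integral_const_mul]
  rw [IntegrableOn, volume_restrict_halfPlane] at hsum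
  rw [volume_restrict_halfPlane] at hFi' ⊢
  rw [integral_prod _ hFi', integral_prod _ hsum]
  refine integral_mono hFi'.integral_prod_left hsum.integral_prod_left fun s ↦ ?_
  simp only [integral_const_mul]
  refine (mul_Theta0_mul_halfLineNorm_le hR (η s) (hF s)).trans_eq ?_
  congr 1 with t
  rw [hF', hG, norm_mul, Complex.norm_real, mul_pow, norm_eq_abs, sq_abs]

lemma integrableOn_norm_sq_partialFourier (hv : IsTestFunction v) :
    IntegrableOn (fun p ↦ ‖partialFourier v p‖ ^ 2) halfPlane := by
  rw [IntegrableOn, volume_restrict_halfPlane]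
  exact integrable_norm_sq_partialFourier hv

lemma setIntegral_norm_sq_partialFourier (hv : IsTestFunction v) :
    ∫ p in halfPlane, ‖partialFourier v p‖ ^ 2 = ∫ p in halfPlane, ‖v p‖ ^ 2 := by
  rw [volume_restrict_halfPlane]
  exact integral_norm_sq_partialFourier hv

/-- A Fourier transform along the boundary reduces the estimate to half-lines. -/
lemma mul_Theta0_mul_setIntegral_le (hR : 0 ≤ R) (b : ℝ) (hv : IsTestFunction v) :
    R * Theta0 * ∫ p in halfPlane, ‖v p‖ ^ 2 ≤
      ∫ p in halfPlane, ‖fderiv ℝ v p (0, 1)‖ ^ 2 +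
        ‖b * (-Complex.I * fderiv ℝ v p (1, 0)) + ((R * p.2 : ℝ) : ℂ) * v p‖ ^ 2 := by
  set w : ℝ × ℝ → ℂ := fun p ↦
    b * (-Complex.I * fderiv ℝ v p (1, 0)) + ((R * p.2 : ℝ) : ℂ) * v p
  have hv' := hv.fderiv_apply (0, 1)
  have hw : IsTestFunction w :=
    (((hv.fderiv_apply (1, 0)).mul_left contDiff_const).mul_left contDiff_const).add
      (hv.ofReal_mul (by fun_prop))
  have key := mul_Theta0_mul_setIntegral_le_of_slices hR (fun ξ ↦ 2 * π * b * ξ)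
    hv.partialFourier_slice (deriv_partialFourier hv)
    (fun ξ t ↦ partialFourier_symbol hv b R (ξ, t))
    (integrableOn_norm_sq_partialFourier hv) (integrableOn_norm_sq_partialFourier hv')
    (integrableOn_norm_sq_partialFourier hw)
  rw [setIntegral_norm_sq_partialFourier hv, integral_add
    (integrableOn_norm_sq_partialFourier hv') (integrableOn_norm_sq_partialFourier hw),
    setIntegral_norm_sq_partialFourier hv', setIntegral_norm_sq_partialFourier hw] at key
  rwa [integral_add hv'.norm_sq.integrable.integrableOn hw.norm_sq.integrable.integrableOn]

lemma neg_I_mul_fderiv_cexp_mul {φ : ℝ × ℝ → ℝ} (hφ : Differentiable ℝ φ)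
    (hv : Differentiable ℝ v) (p e : ℝ × ℝ) :
    -Complex.I * fderiv ℝ (fun p ↦ Complex.exp (φ p * Complex.I) * v p) p e =
      Complex.exp (φ p * Complex.I) *
        (-Complex.I * fderiv ℝ v p e + (fderiv ℝ φ p e : ℝ) * v p) := by
  simpa [magGrad_apply] using congr($(magGrad_cexp_mul (A := 0) (hφ p) (hv p)) e)

lemma hasFDerivAt_quadratic_fst (b k l : ℝ) (p : ℝ × ℝ) :
    HasFDerivAt (fun p : ℝ × ℝ ↦ (k * p.1 ^ 2 / 2 + l * p.1) / b)
      (((k * p.1 + l) / b) • ContinuousLinearMap.fst ℝ ℝ ℝ) p := by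
  have h : HasDerivAt (fun s ↦ (k * s ^ 2 / 2 + l * s) / b) ((k * p.1 + l) / b) p.1 := by
    refine (((((hasDerivAt_pow 2 p.1).const_mul k).div_const 2).add
      ((hasDerivAt_id' p.1).const_mul l)).div_const b).congr_deriv ?_
    ring
  exact h.comp_hasFDerivAt p hasFDerivAt_fst

/-- If `b = 0` slices suffice; otherwise the phase `exp (i (k s² / 2 + l s) / b)` gauges the
affine term `k s + l` away. -/
lemma mul_Theta0_mul_setIntegral_le_affine (hR : 0 ≤ R) (b k l : ℝ) (hv : IsTestFunction v) :
    R * Theta0 * ∫ p in halfPlane, ‖v p‖ ^ 2 ≤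
      ∫ p in halfPlane, ‖fderiv ℝ v p (0, 1)‖ ^ 2 +
        ‖b * (-Complex.I * fderiv ℝ v p (1, 0)) +
          ((R * p.2 + (k * p.1 + l) : ℝ) : ℂ) * v p‖ ^ 2 := by
  rcases eq_or_ne b 0 with rfl | hb
  · simp only [Complex.ofReal_zero, zero_mul, zero_add]
    exact mul_Theta0_mul_setIntegral_le_of_slices hR (fun s ↦ k * s + l) hv.comp_prodMk_left
      (fun s t ↦ (hv.hasDerivAt_comp_prodMk_left s t).deriv) (fun s t ↦ rfl)
      hv.norm_sq.integrable.integrableOn (hv.fderiv_apply (0, 1)).norm_sq.integrable.integrableOn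
      (hv.ofReal_mul (by fun_prop)).norm_sq.integrable.integrableOn
  set φ : ℝ × ℝ → ℝ := fun p ↦ (k * p.1 ^ 2 / 2 + l * p.1) / b
  have hφ (p : ℝ × ℝ) : HasFDerivAt φ (((k * p.1 + l) / b) • ContinuousLinearMap.fst ℝ ℝ ℝ) p :=
    hasFDerivAt_quadratic_fst b k l p
  have key := mul_Theta0_mul_setIntegral_le hR b (hv.cexp_mul (φ := φ) (by fun_prop))
  have hgrad := neg_I_mul_fderiv_cexp_mul (φ := φ) (fun p ↦ (hφ p).differentiableAt)
    hv.differentiable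
  have hgrad_snd (p : ℝ × ℝ) :
      ‖fderiv ℝ (fun p ↦ Complex.exp (φ p * Complex.I) * v p) p (0, 1)‖ =
        ‖fderiv ℝ v p (0, 1)‖ := by
    simpa [(hφ p).fderiv, Complex.norm_exp_ofReal_mul_I] using congr(‖$(hgrad p (0, 1))‖)
  have hgrad_fst (p : ℝ × ℝ) :
      ‖b * (-Complex.I * fderiv ℝ (fun p ↦ Complex.exp (φ p * Complex.I) * v p) p (1, 0)) +
          ((R * p.2 : ℝ) : ℂ) * (Complex.exp (φ p * Complex.I) * v p)‖ =
        ‖b * (-Complex.I * fderiv ℝ v p (1, 0)) +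
          ((R * p.2 + (k * p.1 + l) : ℝ) : ℂ) * v p‖ := by
    rw [← one_mul ‖(b : ℂ) * (-Complex.I * fderiv ℝ v p (1, 0)) + _‖,
      ← Complex.norm_exp_ofReal_mul_I (φ p), ← norm_mul, hgrad, (hφ p).fderiv]
    congr 1
    have : (b : ℂ) ≠ 0 := mod_cast hb
    simp
    field_simp
    ring
  simpa only [hgrad_snd, hgrad_fst, norm_mul, Complex.norm_exp_ofReal_mul_I, one_mul] using key

lemma setIntegral_halfPlane_fderiv_fst_eq_zero {g : ℝ × ℝ → ℝ} (hg : IsTestFunction g) :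
    ∫ p in halfPlane, fderiv ℝ g p (1, 0) = 0 := by
  have hg' := hg.fderiv_apply (1, 0)
  rw [volume_restrict_halfPlane, integral_prod_symm _ hg'.integrable]
  have hslice (t : ℝ) : ∫ s, fderiv ℝ g (s, t) (1, 0) = 0 :=
    integral_eq_zero_of_hasDerivAt_of_integrable (hg.hasDerivAt_comp_prodMk_right · t)
      (hg'.comp_prodMk_right t).integrable (hg.comp_prodMk_right t).integrable
  simp only [hslice, integral_zero]

lemma norm_sq_add_two_mul_im_le {b p q : ℝ} (h : b ^ 2 + p ^ 2 + q ^ 2 = 1) (z w : ℂ) :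
    ‖b * z + q * w‖ ^ 2 + 2 * p * (z * star w).im ≤ ‖z‖ ^ 2 + ‖w‖ ^ 2 := by
  rcases (by positivity : 0 ≤ p ^ 2 + q ^ 2).eq_or_lt with h0 | hpos
  · obtain rfl : p = 0 := by nlinarith
    obtain rfl : q = 0 := by nlinarith
    have hb : |b| = 1 := by rw [← sq_eq_sq₀ (abs_nonneg b) zero_le_one, sq_abs]; linarith
    simp [hb]
  · have key : (p ^ 2 + q ^ 2) *
        (‖z‖ ^ 2 + ‖w‖ ^ 2 - (‖b * z + q * w‖ ^ 2 + 2 * p * (z * star w).im)) =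
        ‖((p ^ 2 + q ^ 2 : ℝ) : ℂ) * z - ⟨b * q, p⟩ * w‖ ^ 2 := by
      simp only [← Complex.normSq_eq_norm_sq, Complex.normSq_apply, Complex.add_re,
        Complex.add_im, Complex.sub_re, Complex.sub_im, Complex.mul_re, Complex.mul_im,
        Complex.ofReal_re, Complex.ofReal_im, Complex.star_def, Complex.conj_re, Complex.conj_im]
      linear_combination (-(p ^ 2 + q ^ 2) * (z.re ^ 2 + z.im ^ 2) -
        q ^ 2 * (w.re ^ 2 + w.im ^ 2)) * h
    refine sub_nonneg.1 (nonneg_of_mul_nonneg_right ?_ hpos)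
    rw [key]
    positivity

variable {b1 b2 b3 τ : ℝ} {u : ℝ × ℝ → ℂ}

lemma norm_sq_sub_fderiv_le_energyDensity (h : b1 ^ 2 + b2 ^ 2 + b3 ^ 2 = 1)
    (hu : IsTestFunction u) (p : ℝ × ℝ) :
    ‖fderiv ℝ u p (0, 1)‖ ^ 2 + ‖b3 * (-Complex.I * fderiv ℝ u p (1, 0)) +
          (((b1 ^ 2 + b3 ^ 2) * p.2 + (-(b1 * b2) * p.1 + b1 * τ) : ℝ) : ℂ) * u p‖ ^ 2 +
        b2 ^ 2 * ‖u p‖ ^ 2 -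
        b2 * fderiv ℝ (fun x ↦ (x.1 * b2 - x.2 * b1 - τ) * ‖u x‖ ^ 2) p (1, 0) ≤
      energyDensity b1 b2 b3 τ u p := by
  set V : ℝ := p.1 * b2 - p.2 * b1 - τ with hV_def
  set X := magGrad (planarPotential b3) u p (1, 0) with hX_def
  have hderiv : fderiv ℝ (fun x ↦ (x.1 * b2 - x.2 * b1 - τ) * ‖u x‖ ^ 2) p (1, 0) =
      b2 * ‖u p‖ ^ 2 + 2 * V * inner ℝ (u p) (fderiv ℝ u p (1, 0)) := by
    have hV : HasFDerivAt (fun x : ℝ × ℝ ↦ x.1 * b2 - x.2 * b1 - τ)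
        (b2 • ContinuousLinearMap.fst ℝ ℝ ℝ - b1 • ContinuousLinearMap.snd ℝ ℝ ℝ) p :=
      ((hasFDerivAt_fst.mul_const b2).sub (hasFDerivAt_snd.mul_const b1)).sub_const τ
    rw [(hV.fun_mul (hu.differentiable p).hasFDerivAt.norm_sq).fderiv]
    simp
    ring
  have hcross : (X * star ((V : ℂ) * u p)).im = -(V * inner ℝ (u p) (fderiv ℝ u p (1, 0))) := by
    rw [hX_def, magGrad_planarPotential_apply_fst, Complex.inner]
    simp
    ring
  have hcomb : b3 * X + ((-b1 : ℝ) : ℂ) * (V * u p) = b3 * (-Complex.I * fderiv ℝ u p (1, 0)) +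
      (((b1 ^ 2 + b3 ^ 2) * p.2 + (-(b1 * b2) * p.1 + b1 * τ) : ℝ) : ℂ) * u p := by
    rw [hX_def, magGrad_planarPotential_apply_fst, hV_def]
    push_cast
    ring
  have key := norm_sq_add_two_mul_im_le (b := b3) (p := b2) (q := -b1) (by linarith) X (V * u p)
  rw [hcomb, hcross, norm_mul, Complex.norm_real, mul_pow, norm_eq_abs, sq_abs] at key
  rw [energyDensity, hderiv, magGrad_planarPotential_apply_snd, norm_mul, norm_neg, Complex.norm_I,
    one_mul]
  linarith

/-- With `b2 = sin θ` the component of the field normal to the boundary, the constant is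
`cos² θ Θ₀ + sin² θ`. -/
lemma mul_norm2D_halfPlane_le_energy2D (h : b1 ^ 2 + b2 ^ 2 + b3 ^ 2 = 1) (τ : ℝ)
    (hu : IsTestFunction u) :
    ((b1 ^ 2 + b3 ^ 2) * Theta0 + b2 ^ 2) * norm2D halfPlane u ≤
      energy2D halfPlane b1 b2 b3 τ u := by
  have hg : IsTestFunction fun x : ℝ × ℝ ↦ (x.1 * b2 - x.2 * b1 - τ) * ‖u x‖ ^ 2 :=
    hu.norm_sq.mul_left (by fun_prop)
  set W : ℝ × ℝ → ℂ := fun p ↦ b3 * (-Complex.I * fderiv ℝ u p (1, 0)) +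
    (((b1 ^ 2 + b3 ^ 2) * p.2 + (-(b1 * b2) * p.1 + b1 * τ) : ℝ) : ℂ) * u p
  have hW : IsTestFunction W :=
    (((hu.fderiv_apply (1, 0)).mul_left contDiff_const).mul_left contDiff_const).add
      (hu.ofReal_mul (by fun_prop))
  have hdens : Integrable fun p ↦ ‖fderiv ℝ u p (0, 1)‖ ^ 2 + ‖W p‖ ^ 2 :=
    (hu.fderiv_apply (0, 1)).norm_sq.integrable.add hW.norm_sq.integrable
  have hnorm : Integrable fun p ↦ b2 ^ 2 * ‖u p‖ ^ 2 := hu.norm_sq.integrable.const_mul _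
  have hsum : Integrable fun p ↦
      ‖fderiv ℝ u p (0, 1)‖ ^ 2 + ‖W p‖ ^ 2 + b2 ^ 2 * ‖u p‖ ^ 2 := hdens.add hnorm
  have hdiv : Integrable fun p ↦
      b2 * fderiv ℝ (fun x ↦ (x.1 * b2 - x.2 * b1 - τ) * ‖u x‖ ^ 2) p (1, 0) :=
    (hg.fderiv_apply (1, 0)).integrable.const_mul _
  calc ((b1 ^ 2 + b3 ^ 2) * Theta0 + b2 ^ 2) * norm2D halfPlane u
    _ = (b1 ^ 2 + b3 ^ 2) * Theta0 * norm2D halfPlane u + b2 ^ 2 * norm2D halfPlane u := by ring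
    _ ≤ (∫ p in halfPlane, ‖fderiv ℝ u p (0, 1)‖ ^ 2 + ‖W p‖ ^ 2) +
          b2 ^ 2 * norm2D halfPlane u := by
      gcongr
      exact mul_Theta0_mul_setIntegral_le_affine (by positivity) b3 _ _ hu
    _ = ∫ p in halfPlane, ‖fderiv ℝ u p (0, 1)‖ ^ 2 + ‖W p‖ ^ 2 + b2 ^ 2 * ‖u p‖ ^ 2 -
          b2 * fderiv ℝ (fun x ↦ (x.1 * b2 - x.2 * b1 - τ) * ‖u x‖ ^ 2) p (1, 0) := by
      rw [integral_sub hsum.integrableOn hdiv.integrableOn,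
        integral_add hdens.integrableOn hnorm.integrableOn, integral_const_mul,
        integral_const_mul, setIntegral_halfPlane_fderiv_fst_eq_zero hg, mul_zero, sub_zero,
        norm2D]
    _ ≤ energy2D halfPlane b1 b2 b3 τ u := by
      rw [energy2D_eq_setIntegral_energyDensity]
      exact setIntegral_mono (hsum.sub' hdiv).integrableOn
        (hu.integrable_energyDensity _ _ _ _).integrableOn
        fun p ↦ norm_sq_sub_fderiv_le_energyDensity h hu p

end HalfPlane

section Reflection

/-- The orthogonal reflection of the plane exchanging the direction `(cos β, sin β)` with the
positive `x₁`-axis. -/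
def planarReflection (β : ℝ) : (ℝ × ℝ) ≃L[ℝ] ℝ × ℝ :=
  (LinearEquiv.ofInvolutive
    (Matrix.toLin (Module.Basis.finTwoProd ℝ) (Module.Basis.finTwoProd ℝ)
      !![cos β, sin β; sin β, -cos β])
    fun x ↦ by
      rw [Matrix.toLin_finTwoProd_apply, Matrix.toLin_finTwoProd_apply]
      ext
      · linear_combination x.1 * cos_sq_add_sin_sq β
      · linear_combination x.2 * cos_sq_add_sin_sq β).toContinuousLinearEquiv

lemma planarReflection_apply (β : ℝ) (x : ℝ × ℝ) :
    planarReflection β x = (cos β * x.1 + sin β * x.2, sin β * x.1 - cos β * x.2) := by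
  refine (Matrix.toLin_finTwoProd_apply _ _ _ _ x).trans ?_
  rw [neg_mul, sub_eq_add_neg]

lemma planarReflection_planarReflection (β : ℝ) (x : ℝ × ℝ) :
    planarReflection β (planarReflection β x) = x :=
  (planarReflection β).left_inv x

lemma measurePreserving_planarReflection (β : ℝ) : MeasurePreserving (planarReflection β) where
  measurable := (planarReflection β).continuous.measurable
  map_eq := by
    set A : Matrix (Fin 2) (Fin 2) ℝ := !![cos β, sin β; sin β, -cos β] with hA
    set L := Matrix.toLin (Module.Basis.finTwoProd ℝ) (Module.Basis.finTwoProd ℝ) A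
    have hdet : LinearMap.det L = -1 := by
      rw [LinearMap.det_toLin, hA, Matrix.det_fin_two_of]
      linear_combination -cos_sq_add_sin_sq β
    have h := Measure.map_linearMap_addHaar_eq_smul_addHaar (volume : Measure (ℝ × ℝ))
      (f := L) (by simp [hdet])
    rw [hdet] at h
    simpa using! h

lemma setIntegral_preimage_planarReflection (β : ℝ) (f : ℝ × ℝ → ℝ) (T : Set (ℝ × ℝ)) :
    ∫ x in planarReflection β ⁻¹' T, f (planarReflection β x) = ∫ x in T, f x :=
  (measurePreserving_planarReflection β).setIntegral_preimage_emb
    (planarReflection β).toHomeomorph.measurableEmbedding f T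

lemma measurableSet_preimage_halfPlane (β : ℝ) :
    MeasurableSet (planarReflection β ⁻¹' halfPlane) :=
  (planarReflection β).continuous.measurable measurableSet_halfPlane

/-- The phase that compensates for the change of the potential under `planarReflection β`: see
`planarPotential_add_fderiv_reflectionPhase`. -/
def reflectionPhase (β b : ℝ) (x : ℝ × ℝ) : ℝ :=
  b * (cos β * sin β / 2 * (x.1 ^ 2 - x.2 ^ 2) + sin β ^ 2 * (x.1 * x.2))

lemma contDiff_reflectionPhase (β b : ℝ) : ContDiff ℝ (⊤ : ℕ∞) (reflectionPhase β b) := by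
  unfold reflectionPhase
  fun_prop

lemma planarPotential_add_fderiv_reflectionPhase (β b : ℝ) (x : ℝ × ℝ) :
    planarPotential (-b) x + fderiv ℝ (reflectionPhase β b) x =
      (planarPotential b (planarReflection β x)).comp
        (planarReflection β : ℝ × ℝ →L[ℝ] ℝ × ℝ) := by
  have h1 := hasFDerivAt_fst (𝕜 := ℝ) (p := x)
  have h2 := hasFDerivAt_snd (𝕜 := ℝ) (p := x)
  have hphase := ((((h1.pow 2).sub (h2.pow 2)).const_mul (cos β * sin β / 2)).add
    ((h1.fun_mul h2).const_mul (sin β ^ 2))).const_mul b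
  rw [show fderiv ℝ (reflectionPhase β b) x = _ from hphase.fderiv]
  refine ContinuousLinearMap.ext fun v ↦ ?_
  simp [planarPotential, planarReflection_apply]
  linear_combination (v.1 * x.2 * b) * cos_sq_add_sin_sq β

/-- The function `u` carried along by `planarReflection β`, with the gauge that restores the form
of `energy2D` when the planar field component `b` turns into `-b`. -/
def reflected (β b : ℝ) (u : ℝ × ℝ → ℂ) (x : ℝ × ℝ) : ℂ :=
  Complex.exp (reflectionPhase β b x * Complex.I) * u (planarReflection β x)

variable {u : ℝ × ℝ → ℂ}

lemma IsTestFunction.reflected (hu : IsTestFunction u) (β b : ℝ) :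
    IsTestFunction (reflected β b u) :=
  (hu.comp_continuousLinearEquiv (planarReflection β)).cexp_mul (contDiff_reflectionPhase β b)

lemma norm_reflected (β b : ℝ) (u : ℝ × ℝ → ℂ) (x : ℝ × ℝ) :
    ‖reflected β b u x‖ = ‖u (planarReflection β x)‖ := by
  rw [reflected, norm_mul, Complex.norm_exp_ofReal_mul_I, one_mul]

lemma mem_tsupport_of_mem_tsupport_reflected {β b : ℝ} {x : ℝ × ℝ}
    (hx : x ∈ tsupport (reflected β b u)) : planarReflection β x ∈ tsupport u := by
  have h : x ∈ tsupport (u ∘ (planarReflection β).toHomeomorph) := tsupport_mul_subset_right hx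
  rwa [tsupport_comp_eq_preimage] at h

lemma magGrad_reflected (hu : Differentiable ℝ u) (β b : ℝ) (x : ℝ × ℝ) :
    magGrad (planarPotential (-b)) (reflected β b u) x =
      Complex.exp (reflectionPhase β b x * Complex.I) •
        (magGrad (planarPotential b) u (planarReflection β x)).comp
          (planarReflection β : ℝ × ℝ →L[ℝ] ℝ × ℝ) := by
  have hcomp : DifferentiableAt ℝ (fun y ↦ u (planarReflection β y)) x :=
    (hu.comp (planarReflection β).differentiable) x
  have hphase := ((contDiff_reflectionPhase β b).differentiable (by simp)) x
  refine (magGrad_cexp_mul hphase hcomp).trans ?_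
  simp only [planarPotential_add_fderiv_reflectionPhase]
  exact congrArg _ (magGrad_comp_continuousLinearMap
    (planarReflection β : ℝ × ℝ →L[ℝ] ℝ × ℝ) (hu _))

lemma energyDensity_reflected (hu : Differentiable ℝ u) (β b1 b2 b3 τ : ℝ) (x : ℝ × ℝ) :
    energyDensity (-(cos β * b1 + sin β * b2)) (cos β * b2 - sin β * b1) (-b3) τ
        (reflected β b3 u) x =
      energyDensity b1 b2 b3 τ u (planarReflection β x) := by
  set X := magGrad (planarPotential b3) u (planarReflection β x)
  have h1 : X (planarReflection β (1, 0)) = (cos β : ℝ) * X (1, 0) + (sin β : ℝ) * X (0, 1) := by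
    have h : planarReflection β (1, 0) =
        cos β • ((1 : ℝ), (0 : ℝ)) + sin β • ((0 : ℝ), (1 : ℝ)) := by
      simp [planarReflection_apply]
    rw [h, map_add, map_smul, map_smul, Complex.real_smul, Complex.real_smul]
  have h2 : X (planarReflection β (0, 1)) = (sin β : ℝ) * X (1, 0) - (cos β : ℝ) * X (0, 1) := by
    have h : planarReflection β (0, 1) =
        sin β • ((1 : ℝ), (0 : ℝ)) - cos β • ((0 : ℝ), (1 : ℝ)) := by
      simp [planarReflection_apply]
    rw [h, map_sub, map_smul, map_smul, Complex.real_smul, Complex.real_smul]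
  have hV : x.1 * (cos β * b2 - sin β * b1) - x.2 * -(cos β * b1 + sin β * b2) =
      (planarReflection β x).1 * b2 - (planarReflection β x).2 * b1 := by
    rw [planarReflection_apply]
    ring
  rw [energyDensity, energyDensity, norm_reflected, magGrad_reflected hu, hV]
  simp only [smul_apply, ContinuousLinearMap.comp_apply,
    ContinuousLinearEquiv.coe_coe, norm_smul, Complex.norm_exp_ofReal_mul_I, one_mul]
  rw [h1, h2, norm_sq_add_norm_sq_of_sq_add_sq_eq_one (cos_sq_add_sin_sq β)]

lemma energy2D_reflected (hu : Differentiable ℝ u) (T : Set (ℝ × ℝ)) (β b1 b2 b3 τ : ℝ) :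
    energy2D (planarReflection β ⁻¹' T) (-(cos β * b1 + sin β * b2)) (cos β * b2 - sin β * b1)
        (-b3) τ (reflected β b3 u) =
      energy2D T b1 b2 b3 τ u := by
  simp only [energy2D_eq_setIntegral_energyDensity, energyDensity_reflected hu]
  exact setIntegral_preimage_planarReflection β _ T

lemma norm2D_reflected (β b : ℝ) (u : ℝ × ℝ → ℂ) (T : Set (ℝ × ℝ)) :
    norm2D (planarReflection β ⁻¹' T) (reflected β b u) = norm2D T u := by
  simp only [norm2D, norm_reflected]
  exact setIntegral_preimage_planarReflection β (fun x ↦ ‖u x‖ ^ 2) T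

end Reflection

section DomainChange

lemma setIntegral_congr_of_inter_eq {X F : Type*} [MeasurableSpace X] {μ : Measure X}
    [NormedAddCommGroup F] [NormedSpace ℝ F] {f : X → F} {S T K : Set X} (hS : MeasurableSet S)
    (hT : MeasurableSet T) (hf : ∀ x ∉ K, f x = 0) (h : S ∩ K = T ∩ K) :
    ∫ x in S, f x ∂μ = ∫ x in T, f x ∂μ := by
  have hinter {Ω : Set X} (hΩ : MeasurableSet Ω) : ∫ x in Ω, f x ∂μ = ∫ x in Ω ∩ K, f x ∂μ :=
    setIntegral_eq_of_subset_of_forall_sdiff_eq_zero hΩ inter_subset_left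
      fun x hx ↦ hf x fun hK ↦ hx.2 ⟨hx.1, hK⟩
  rw [hinter hS, hinter hT, h]

variable {S T : Set (ℝ × ℝ)} {u : ℝ × ℝ → ℂ}

lemma energy2D_congr_set (hS : MeasurableSet S) (hT : MeasurableSet T)
    (h : S ∩ tsupport u = T ∩ tsupport u) (b1 b2 b3 τ : ℝ) :
    energy2D S b1 b2 b3 τ u = energy2D T b1 b2 b3 τ u := by
  simp only [energy2D_eq_setIntegral_energyDensity]
  exact setIntegral_congr_of_inter_eq hS hT (fun _ ↦ energyDensity_of_notMem_tsupport) h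

lemma norm2D_congr_set (hS : MeasurableSet S) (hT : MeasurableSet T)
    (h : S ∩ tsupport u = T ∩ tsupport u) : norm2D S u = norm2D T u :=
  setIntegral_congr_of_inter_eq hS hT
    (fun x hx ↦ by simp [image_eq_zero_of_notMem_tsupport hx]) h

/-- The half-plane bound transported to the half-plane `planarReflection β ⁻¹' halfPlane`, for
functions which do not see the rest of the boundary of `T`. -/
lemma mul_norm2D_le_energy2D_of_inter_eq (hT : MeasurableSet T) (hu : IsTestFunction u) {β : ℝ}
    (h : T ∩ tsupport u = planarReflection β ⁻¹' halfPlane ∩ tsupport u) {b1 b2 b3 : ℝ}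
    (hb : b1 ^ 2 + b2 ^ 2 + b3 ^ 2 = 1) (τ : ℝ) :
    ((1 - (cos β * b2 - sin β * b1) ^ 2) * Theta0 + (cos β * b2 - sin β * b1) ^ 2) * norm2D T u ≤
      energy2D T b1 b2 b3 τ u := by
  have hpre : planarReflection β ⁻¹' (planarReflection β ⁻¹' halfPlane) = halfPlane := by
    ext x
    simp only [mem_preimage, planarReflection_planarReflection]
  have hunit :
      (-(cos β * b1 + sin β * b2)) ^ 2 + (cos β * b2 - sin β * b1) ^ 2 + (-b3) ^ 2 = 1 := by
    linear_combination hb + (b1 ^ 2 + b2 ^ 2) * cos_sq_add_sin_sq β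
  have key := mul_norm2D_halfPlane_le_energy2D hunit τ (hu.reflected β b3)
  rw [← hpre, energy2D_reflected hu.differentiable, norm2D_reflected] at key
  rw [norm2D_congr_set hT (measurableSet_preimage_halfPlane β) h,
    energy2D_congr_set hT (measurableSet_preimage_halfPlane β) h]
  rwa [← hunit, add_right_comm, add_sub_cancel_right]

end DomainChange

section Sector

variable {α : ℝ}

lemma cos_half_pos (hα : α ∈ Ioo 0 π) : 0 < cos (α / 2) :=
  cos_pos_of_mem_Ioo ⟨by linarith [hα.1, pi_pos], by linarith [hα.2]⟩

lemma sin_half_pos (hα : α ∈ Ioo 0 π) : 0 < sin (α / 2) :=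
  sin_pos_of_pos_of_lt_pi (by linarith [hα.1]) (by linarith [hα.1, hα.2])

lemma sector_eq_inter (hα : α ∈ Ioo 0 π) :
    sector α = planarReflection (α / 2) ⁻¹' halfPlane ∩
      planarReflection (π - α / 2) ⁻¹' halfPlane := by
  have hcos := cos_half_pos hα
  ext x
  simp only [sector, halfPlane, mem_inter_iff, mem_preimage, mem_ofPred_eq, planarReflection_apply,
    sin_pi_sub, cos_pi_sub, tan_eq_sin_div_cos]
  rw [← mul_div_assoc, le_div_iff₀ hcos, ← abs_of_pos hcos, ← abs_mul, abs_of_pos hcos, abs_le]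
  constructor <;> rintro ⟨h1, h2⟩ <;> constructor <;> linarith

lemma measurableSet_sector (α : ℝ) : MeasurableSet (sector α) :=
  (isClosed_le (by fun_prop) (by fun_prop)).measurableSet

end Sector

section BandFunction

variable {α b1 b2 b3 τ : ℝ} {u : ℝ × ℝ → ℂ}

lemma exists_norm2D_sector_pos (hα : α ∈ Ioo 0 π) :
    ∃ u, IsTestFunction u ∧ 0 < norm2D (sector α) u := by
  have htan : 0 < tan (α / 2) :=
    tan_pos_of_pos_of_lt_pi_div_two (by linarith [hα.1]) (by linarith [hα.2])
  let f : ContDiffBump ((1, 0) : ℝ × ℝ) := ⟨1, 2, by norm_num, by norm_num⟩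
  have hf : IsTestFunction fun x ↦ (f x : ℂ) :=
    IsTestFunction.ofReal ⟨f.contDiff, f.hasCompactSupport⟩
  refine ⟨_, hf, ?_⟩
  rw [norm2D, setIntegral_pos_iff_support_of_nonneg_ae (ae_of_all _ fun x ↦ by positivity)
    hf.norm_sq.integrable.integrableOn]
  have hopen : IsOpen (Metric.ball ((1, 0) : ℝ × ℝ) 2 ∩ {x | |x.2| < x.1 * tan (α / 2)}) :=
    Metric.isOpen_ball.inter (isOpen_lt (by fun_prop) (by fun_prop))
  refine (hopen.measure_pos volume ⟨(1, 0), by simp, by simpa⟩).trans_le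
    (measure_mono fun x hx ↦ ⟨?_, (show |x.2| < _ from hx.2).le⟩)
  have hfx : f x ≠ 0 := by
    rw [← Function.mem_support, f.support_eq]
    exact hx.1
  simpa using hfx

lemma bandFn_mul_norm2D_le (hu : IsTestFunction u) (α b1 b2 b3 τ : ℝ) :
    bandFn α b1 b2 b3 τ * norm2D (sector α) u ≤ energy2D (sector α) b1 b2 b3 τ u := by
  rcases (norm2D_nonneg (Ω := sector α) (u := u)).eq_or_lt with h0 | hpos
  · rw [← h0, mul_zero]
    exact energy2D_nonneg
  · rw [← le_div_iff₀ hpos]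
    refine csInf_le ⟨0, ?_⟩ ⟨u, hu.contDiff, hu.hasCompactSupport, hpos, rfl⟩
    rintro r ⟨v, -, -, -, rfl⟩
    exact div_nonneg energy2D_nonneg norm2D_nonneg

lemma bandFn_lt_of_energy2D_lt (hu : IsTestFunction u) (hpos : 0 < norm2D (sector α) u) {x : ℝ}
    (h : energy2D (sector α) b1 b2 b3 τ u < x * norm2D (sector α) u) :
    bandFn α b1 b2 b3 τ < x :=
  lt_of_mul_lt_mul_right ((bandFn_mul_norm2D_le hu α b1 b2 b3 τ).trans_lt h) hpos.le

lemma le_bandFn (hα : α ∈ Ioo 0 π) {c : ℝ}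
    (h : ∀ u, IsTestFunction u →
      c * norm2D (sector α) u ≤ energy2D (sector α) b1 b2 b3 τ u) :
    c ≤ bandFn α b1 b2 b3 τ := by
  obtain ⟨u, hu, hpos⟩ := exists_norm2D_sector_pos hα
  refine le_csInf ⟨_, u, hu.contDiff, hu.hasCompactSupport, hpos, rfl⟩ ?_
  rintro r ⟨v, hv, hvc, hvpos, rfl⟩
  rw [le_div_iff₀ hvpos]
  exact h v ⟨hv, hvc⟩

lemma bandFn_nonneg (hα : α ∈ Ioo 0 π) : 0 ≤ bandFn α b1 b2 b3 τ :=
  le_bandFn hα fun u _ ↦ by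
    rw [zero_mul]
    exact energy2D_nonneg

lemma bandFn_neg_neg_neg (α b1 b2 b3 τ : ℝ) :
    bandFn α (-b1) (-b2) b3 (-τ) = bandFn α b1 b2 b3 τ := by
  have hV (x : ℝ × ℝ) : (x.1 * -b2 - x.2 * -b1 - -τ) ^ 2 = (x.1 * b2 - x.2 * b1 - τ) ^ 2 := by
    ring
  simp only [bandFn, specInf2D, energy2D, hV]

lemma energy2D_eq_quadratic (Ω : Set (ℝ × ℝ)) (hu : IsTestFunction u) (b1 b2 b3 τ : ℝ) :
    energy2D Ω b1 b2 b3 τ u = energy2D Ω b1 b2 b3 0 u -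
      2 * τ * (∫ x in Ω, (x.1 * b2 - x.2 * b1) * ‖u x‖ ^ 2) + τ ^ 2 * norm2D Ω u := by
  have h0 : IntegrableOn (energyDensity b1 b2 b3 0 u) Ω :=
    (hu.integrable_energyDensity b1 b2 b3 0).integrableOn
  have h1 : IntegrableOn (fun x ↦ 2 * τ * ((x.1 * b2 - x.2 * b1) * ‖u x‖ ^ 2)) Ω :=
    ((hu.norm_sq.mul_left (by fun_prop)).integrable.const_mul _).integrableOn
  have h2 : IntegrableOn (fun x ↦ τ ^ 2 * ‖u x‖ ^ 2) Ω :=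
    (hu.norm_sq.integrable.const_mul _).integrableOn
  have h01 : IntegrableOn (fun x ↦ energyDensity b1 b2 b3 0 u x -
      2 * τ * ((x.1 * b2 - x.2 * b1) * ‖u x‖ ^ 2)) Ω := h0.sub h1
  rw [energy2D_eq_setIntegral_energyDensity, energy2D_eq_setIntegral_energyDensity, norm2D,
    ← integral_const_mul, ← integral_const_mul, ← integral_sub h0 h1, ← integral_add h01 h2]
  congr 1 with x
  simp only [energyDensity]
  ring

/-- As an infimum of functions `τ ↦ τ² + (affine function of τ)`, the band function minus `τ²` is
concave. -/
lemma concaveOn_bandFn_sub_sq (hα : α ∈ Ioo 0 π) (b1 b2 b3 : ℝ) :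
    ConcaveOn ℝ univ fun τ ↦ bandFn α b1 b2 b3 τ - τ ^ 2 := by
  refine ⟨convex_univ, fun x _ y _ a b ha hb hab ↦ ?_⟩
  simp only [smul_eq_mul]
  rw [le_sub_iff_add_le]
  refine le_bandFn hα fun u hu ↦ ?_
  have hx := mul_le_mul_of_nonneg_left (bandFn_mul_norm2D_le hu α b1 b2 b3 x) ha
  have hy := mul_le_mul_of_nonneg_left (bandFn_mul_norm2D_le hu α b1 b2 b3 y) hb
  rw [energy2D_eq_quadratic _ hu] at hx hy ⊢
  obtain rfl : b = 1 - a := by linarith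
  linear_combination hx + hy

lemma continuous_bandFn (hα : α ∈ Ioo 0 π) (b1 b2 b3 : ℝ) :
    Continuous fun τ ↦ bandFn α b1 b2 b3 τ := by
  have h := continuousOn_univ.1 ((concaveOn_bandFn_sub_sq hα b1 b2 b3).continuousOn isOpen_univ)
  exact (h.add (continuous_pow 2)).congr fun τ ↦ sub_add_cancel _ _

lemma sq_le_bandFn (hα : α ∈ Ioo 0 π) (h : ∀ x ∈ sector α, 0 ≤ x.1 * b2 - x.2 * b1)
    (hτ : τ ≤ 0) : τ ^ 2 ≤ bandFn α b1 b2 b3 τ := by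
  refine le_bandFn hα fun u hu ↦ ?_
  have hint : 0 ≤ ∫ x in sector α, (x.1 * b2 - x.2 * b1) * ‖u x‖ ^ 2 :=
    setIntegral_nonneg (measurableSet_sector α) fun x hx ↦ mul_nonneg (h x hx) (sq_nonneg _)
  have hE : 0 ≤ energy2D (sector α) b1 b2 b3 0 u := energy2D_nonneg
  rw [energy2D_eq_quadratic _ hu]
  linarith [mul_nonneg (neg_nonneg.2 hτ) hint]

lemma bandFn_zero_le_of_axial_field (hα : α ∈ Ioo 0 π) (b3 τ : ℝ) :
    bandFn α 0 0 b3 0 ≤ bandFn α 0 0 b3 τ := by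
  refine le_bandFn hα fun u hu ↦ (bandFn_mul_norm2D_le hu α 0 0 b3 0).trans ?_
  rw [energy2D_eq_quadratic _ hu 0 0 b3 τ]
  simpa using mul_nonneg (sq_nonneg τ) norm2D_nonneg

end BandFunction

section ModulatedProduct

/-- The plane wave `e^{iκs}` along the boundary of the half-plane, with envelope `χ` in the
tangential variable `s` and profile `f` in the normal variable. -/
def modulatedProduct (κ : ℝ) (χ : ℝ → ℝ) (f : ℝ → ℂ) (y : ℝ × ℝ) : ℂ :=
  Complex.exp ((κ * y.1 : ℝ) * Complex.I) * (χ y.1 * f y.2)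

variable {χ : ℝ → ℝ} {f : ℝ → ℂ}

lemma tsupport_ofReal_mul_prod_subset (χ : ℝ → ℝ) (f : ℝ → ℂ) :
    tsupport (fun y : ℝ × ℝ ↦ (χ y.1 : ℂ) * f y.2) ⊆ tsupport χ ×ˢ tsupport f := by
  refine closure_minimal (fun y hy ↦ ?_) ((isClosed_tsupport χ).prod (isClosed_tsupport f))
  have h : χ y.1 ≠ 0 ∧ f y.2 ≠ 0 := by simpa using hy
  exact ⟨subset_tsupport χ h.1, subset_tsupport f h.2⟩

lemma IsTestFunction.ofReal_mul_prod (hχ : IsTestFunction χ) (hf : IsTestFunction f) :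
    IsTestFunction fun y : ℝ × ℝ ↦ (χ y.1 : ℂ) * f y.2 where
  contDiff := (hχ.ofReal.contDiff.comp contDiff_fst).mul (hf.contDiff.comp contDiff_snd)
  hasCompactSupport := (hχ.hasCompactSupport.isCompact.prod
    hf.hasCompactSupport.isCompact).of_isClosed_subset (isClosed_tsupport _)
    (tsupport_ofReal_mul_prod_subset χ f)

lemma IsTestFunction.modulatedProduct (hχ : IsTestFunction χ) (hf : IsTestFunction f) (κ : ℝ) :
    IsTestFunction (modulatedProduct κ χ f) :=
  (hχ.ofReal_mul_prod hf).cexp_mul (contDiff_const.mul contDiff_fst)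

lemma tsupport_modulatedProduct_subset (κ : ℝ) (χ : ℝ → ℝ) (f : ℝ → ℂ) :
    tsupport (modulatedProduct κ χ f) ⊆ tsupport χ ×ˢ tsupport f :=
  (tsupport_mul_subset_right).trans (tsupport_ofReal_mul_prod_subset χ f)

lemma norm_modulatedProduct_sq (κ : ℝ) (χ : ℝ → ℝ) (f : ℝ → ℂ) (y : ℝ × ℝ) :
    ‖modulatedProduct κ χ f y‖ ^ 2 = χ y.1 ^ 2 * ‖f y.2‖ ^ 2 := by
  rw [modulatedProduct, norm_mul, Complex.norm_exp_ofReal_mul_I, one_mul, norm_mul,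
    Complex.norm_real, mul_pow, norm_eq_abs, sq_abs]

lemma magGrad_modulatedProduct (hχ : IsTestFunction χ) (hf : IsTestFunction f) (κ b : ℝ)
    (y v : ℝ × ℝ) :
    magGrad (planarPotential b) (modulatedProduct κ χ f) y v =
      Complex.exp ((κ * y.1 : ℝ) * Complex.I) *
        (-Complex.I * fderiv ℝ (fun y : ℝ × ℝ ↦ (χ y.1 : ℂ) * f y.2) y v +
          ((y.2 * b + κ) * v.1 : ℝ) * (χ y.1 * f y.2)) := by
  have hφ : HasFDerivAt (fun y : ℝ × ℝ ↦ κ * y.1) (κ • ContinuousLinearMap.fst ℝ ℝ ℝ) y :=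
    hasFDerivAt_fst.const_mul κ
  have h := magGrad_cexp_mul (A := planarPotential b) hφ.differentiableAt
    ((hχ.ofReal_mul_prod hf).differentiable y)
  rw [show modulatedProduct κ χ f = fun y ↦ Complex.exp ((κ * y.1 : ℝ) * Complex.I) *
    (χ y.1 * f y.2) from rfl, h, smul_apply, smul_eq_mul, magGrad_apply]
  simp [planarPotential, add_mul, hφ.fderiv]

lemma magGrad_modulatedProduct_apply_fst (hχ : IsTestFunction χ) (hf : IsTestFunction f)
    (κ b : ℝ) (y : ℝ × ℝ) :
    magGrad (planarPotential b) (modulatedProduct κ χ f) y (1, 0) =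
      Complex.exp ((κ * y.1 : ℝ) * Complex.I) *
        (((χ y.1 * (y.2 * b + κ) : ℝ) + (-deriv χ y.1 : ℝ) * Complex.I) * f y.2) := by
  have h : fderiv ℝ (fun y : ℝ × ℝ ↦ (χ y.1 : ℂ) * f y.2) y (1, 0) = deriv χ y.1 * f y.2 :=
    ((hχ.ofReal_mul_prod hf).hasDerivAt_comp_prodMk_right y.1 y.2).unique
      ((hχ.differentiable y.1).hasDerivAt.ofReal_comp.mul_const (f y.2))
  rw [magGrad_modulatedProduct hχ hf, h]
  push_cast
  ring

lemma magGrad_modulatedProduct_apply_snd (hχ : IsTestFunction χ) (hf : IsTestFunction f)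
    (κ b : ℝ) (y : ℝ × ℝ) :
    magGrad (planarPotential b) (modulatedProduct κ χ f) y (0, 1) =
      Complex.exp ((κ * y.1 : ℝ) * Complex.I) * (-Complex.I * (χ y.1 * deriv f y.2)) := by
  have h : fderiv ℝ (fun y : ℝ × ℝ ↦ (χ y.1 : ℂ) * f y.2) y (0, 1) = χ y.1 * deriv f y.2 :=
    ((hχ.ofReal_mul_prod hf).hasDerivAt_comp_prodMk_left y.1 y.2).unique
      ((hf.differentiable y.2).hasDerivAt.const_mul (χ y.1 : ℂ))
  rw [magGrad_modulatedProduct hχ hf, h, mul_zero, Complex.ofReal_zero, zero_mul, add_zero]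

lemma energyDensity_modulatedProduct (hχ : IsTestFunction χ) (hf : IsTestFunction f) {σ b : ℝ}
    (h : σ ^ 2 + b ^ 2 = 1) (ξ : ℝ) (y : ℝ × ℝ) :
    energyDensity (-σ) 0 (-b) (σ * ξ) (modulatedProduct (b * ξ) χ f) y =
      deriv χ y.1 ^ 2 * ‖f y.2‖ ^ 2 +
        χ y.1 ^ 2 * (‖deriv f y.2‖ ^ 2 + (y.2 - ξ) ^ 2 * ‖f y.2‖ ^ 2) := by
  have hnorm (a c : ℝ) : ‖(a + c * Complex.I : ℂ)‖ ^ 2 = a ^ 2 + c ^ 2 := by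
    rw [← Complex.normSq_eq_norm_sq, Complex.normSq_add_mul_I]
  rw [energyDensity, magGrad_modulatedProduct_apply_fst hχ hf,
    magGrad_modulatedProduct_apply_snd hχ hf, norm_modulatedProduct_sq]
  simp only [norm_mul, Complex.norm_exp_ofReal_mul_I, one_mul, mul_pow, hnorm, norm_neg,
    Complex.norm_I, Complex.norm_real, norm_eq_abs, sq_abs]
  linear_combination (χ y.1 ^ 2 * (y.2 - ξ) ^ 2 * ‖f y.2‖ ^ 2) * h

lemma norm2D_halfPlane_modulatedProduct (κ : ℝ) (χ : ℝ → ℝ) (f : ℝ → ℂ) :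
    norm2D halfPlane (modulatedProduct κ χ f) = (∫ s, χ s ^ 2) * halfLineNorm f := by
  simp_rw [norm2D, norm_modulatedProduct_sq, volume_restrict_halfPlane]
  exact integral_prod_mul (fun s ↦ χ s ^ 2) fun t ↦ ‖f t‖ ^ 2

lemma energy2D_halfPlane_modulatedProduct (hχ : IsTestFunction χ) (hf : IsTestFunction f)
    {σ b : ℝ} (h : σ ^ 2 + b ^ 2 = 1) (ξ : ℝ) :
    energy2D halfPlane (-σ) 0 (-b) (σ * ξ) (modulatedProduct (b * ξ) χ f) =
      (∫ s, deriv χ s ^ 2) * halfLineNorm f + (∫ s, χ s ^ 2) * halfLineEnergy ξ f := by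
  have hsq {g : ℝ → ℝ} (hg : IsTestFunction g) : Integrable fun s ↦ g s ^ 2 := by
    simpa using hg.ofReal.norm_sq.integrable (μ := volume)
  have hE : Integrable (fun t ↦ ‖deriv f t‖ ^ 2 + (t - ξ) ^ 2 * ‖f t‖ ^ 2)
      (volume.restrict (Ioi 0)) :=
    (hf.deriv.norm_sq.add (hf.norm_sq.mul_left (by fun_prop))).integrable
  simp_rw [energy2D_eq_setIntegral_energyDensity, energyDensity_modulatedProduct hχ hf h,
    volume_restrict_halfPlane]
  rw [integral_add ((hsq hχ.deriv).mul_prod hf.norm_sq.integrable) ((hsq hχ).mul_prod hE)]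
  exact congr_arg₂ _ (integral_prod_mul (fun s ↦ deriv χ s ^ 2) fun t ↦ ‖f t‖ ^ 2)
    (integral_prod_mul (fun s ↦ χ s ^ 2) fun t ↦ ‖deriv f t‖ ^ 2 + (t - ξ) ^ 2 * ‖f t‖ ^ 2)

lemma integral_sq_deriv_comp_mul_left (ψ : ℝ → ℝ) {c : ℝ} (hc : 0 < c) :
    ∫ s, deriv (fun s ↦ ψ (c * s)) s ^ 2 = c * ∫ s, deriv ψ s ^ 2 := by
  simp_rw [deriv_comp_mul_left, smul_eq_mul, mul_pow, integral_const_mul]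
  rw [Measure.integral_comp_mul_left fun s ↦ deriv ψ s ^ 2, abs_of_pos (inv_pos.2 hc), smul_eq_mul]
  field_simp

lemma exists_isTestFunction_tsupport_subset_Ici_one :
    ∃ ψ : ℝ → ℝ, IsTestFunction ψ ∧ tsupport ψ ⊆ Ici 1 ∧ 0 < ∫ s, ψ s ^ 2 := by
  let ψ : ContDiffBump (3 : ℝ) := ⟨1, 2, one_pos, one_lt_two⟩
  refine ⟨ψ, ⟨ψ.contDiff, ψ.hasCompactSupport⟩, ?_, ?_⟩
  · rw [ψ.tsupport_eq, Real.closedBall_eq_Icc]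
    exact fun s hs ↦ le_trans (by norm_num [ψ]) hs.1
  · refine (ψ.continuous.pow 2).integral_pos_of_hasCompactSupport_nonneg_nonzero ?_
      (fun s ↦ sq_nonneg _) (x := 3) ?_
    · exact ψ.hasCompactSupport.comp_left (g := fun x : ℝ ↦ x ^ 2) (by simp)
    · exact pow_ne_zero 2 ((ψ.one_of_mem_closedBall (by simp [ψ])).trans_ne one_ne_zero)

lemma exists_isTestFunction_integral_deriv_sq_lt {ε : ℝ} (hε : 0 < ε) (M : ℝ) :
    ∃ χ : ℝ → ℝ, IsTestFunction χ ∧ tsupport χ ⊆ Ici M ∧ 0 < ∫ s, χ s ^ 2 ∧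
      ∫ s, deriv χ s ^ 2 < ε * ∫ s, χ s ^ 2 := by
  obtain ⟨ψ, hψ, hψsupp, hψsq⟩ := exists_isTestFunction_tsupport_subset_Ici_one
  obtain ⟨n, hnM, hn⟩ : ∃ n : ℝ, max 1 M ≤ n ∧ ∫ s, deriv ψ s ^ 2 < n * (ε * ∫ s, ψ s ^ 2) :=
    ((eventually_ge_atTop _).and ((tendsto_id.atTop_mul_const (by positivity)).eventually_gt_atTop
      (∫ s, deriv ψ s ^ 2))).exists
  have hn1 : 1 ≤ n := (le_max_left _ _).trans hnM
  have hn0 : 0 < n := one_pos.trans_le hn1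
  have hχsq : ∫ s, ψ (n⁻¹ * s) ^ 2 = n * ∫ s, ψ s ^ 2 := by
    rw [Measure.integral_comp_mul_left fun s ↦ ψ s ^ 2, inv_inv, abs_of_pos hn0, smul_eq_mul]
  refine ⟨fun s ↦ ψ (n⁻¹ * s), hψ.comp_mul_left (inv_ne_zero hn0.ne'), fun s hs ↦ ?_, ?_, ?_⟩
  · have h1 : 1 ≤ n⁻¹ * s :=
      hψsupp (tsupport_comp_subset_preimage ψ (continuous_const.mul continuous_id) hs)
    rw [le_inv_mul_iff₀ hn0, mul_one] at h1
    exact (le_max_right _ _).trans (hnM.trans h1)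
  · rw [hχsq]
    positivity
  · rw [hχsq, integral_sq_deriv_comp_mul_left ψ (inv_pos.2 hn0), inv_mul_lt_iff₀ hn0]
    refine hn.trans_le ?_
    have : 0 ≤ n * (ε * ∫ s, ψ s ^ 2) := by positivity
    nlinarith

lemma exists_energy2D_halfPlane_lt {σ b x : ℝ} (h : σ ^ 2 + b ^ 2 = 1) (hx : Theta0 < x) (M : ℝ) :
    ∃ τ v, IsTestFunction v ∧ 0 < norm2D halfPlane v ∧
      energy2D halfPlane (-σ) 0 (-b) τ v < x * norm2D halfPlane v ∧
      ∀ y ∈ tsupport v, M * y.2 ≤ y.1 := by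
  obtain ⟨ξ, f, hf, hfpos, hfE⟩ := exists_halfLineEnergy_lt hx
  obtain ⟨M', hM'⟩ : ∃ M', ∀ t ∈ tsupport f, M * t ≤ M' := by
    simpa [bddAbove_def] using
      (hf.hasCompactSupport.isCompact.image (continuous_const.mul continuous_id)).bddAbove
  obtain ⟨χ, hχ, hχM, hχpos, hχlt⟩ := exists_isTestFunction_integral_deriv_sq_lt
    (ε := (x * halfLineNorm f - halfLineEnergy ξ f) / halfLineNorm f)
    (div_pos (sub_pos.2 hfE) hfpos) M'
  refine ⟨σ * ξ, modulatedProduct (b * ξ) χ f, hχ.modulatedProduct hf _, ?_, ?_, fun y hy ↦ ?_⟩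
  · rw [norm2D_halfPlane_modulatedProduct]
    positivity
  · rw [norm2D_halfPlane_modulatedProduct, energy2D_halfPlane_modulatedProduct hχ hf h]
    rw [div_mul_eq_mul_div, lt_div_iff₀ hfpos] at hχlt
    linarith
  · obtain ⟨hs, ht⟩ := tsupport_modulatedProduct_subset _ _ _ hy
    exact (hM' _ ht).trans (hχM hs)

end ModulatedProduct

section UpperBound

variable {α σ b x : ℝ}

lemma exists_bandFn_lt (hα : α ∈ Ioo 0 π) (h : σ ^ 2 + b ^ 2 = 1) (hx : Theta0 < x) :
    ∃ τ, bandFn α (σ * cos (α / 2)) (σ * sin (α / 2)) b τ < x := by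
  have hC := cos_half_pos hα
  have hS := sin_half_pos hα
  -- The constant is `cot α`: `planarReflection (α / 2)` maps the lower face to `y₁ = cot α · y₂`.
  obtain ⟨τ, v, hv, hvpos, hvlt, hvsupp⟩ := exists_energy2D_halfPlane_lt h hx
    ((cos (α / 2) ^ 2 - sin (α / 2) ^ 2) / (2 * sin (α / 2) * cos (α / 2)))
  set w := reflected (α / 2) (-b) v
  have hfar {y : ℝ × ℝ} (hy : y ∈ tsupport w) :
      y ∈ planarReflection (π - α / 2) ⁻¹' halfPlane := by
    have h := hvsupp _ (mem_tsupport_of_mem_tsupport_reflected hy)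
    rw [div_mul_eq_mul_div, div_le_iff₀ (by positivity), planarReflection_apply] at h
    have hy' : 0 ≤ sin (α / 2) * y.1 + cos (α / 2) * y.2 := by
      linear_combination h + (sin (α / 2) * y.1 + cos (α / 2) * y.2) * cos_sq_add_sin_sq (α / 2)
    simpa [halfPlane, planarReflection_apply, sin_pi_sub, cos_pi_sub] using hy'
  have hinter : sector α ∩ tsupport w = planarReflection (α / 2) ⁻¹' halfPlane ∩ tsupport w := by
    rw [sector_eq_inter hα]
    exact Subset.antisymm (fun y hy ↦ ⟨hy.1.1, hy.2⟩) fun y hy ↦ ⟨⟨hy.1, hfar hy.2⟩, hy.2⟩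
  have hface := measurableSet_preimage_halfPlane (α / 2)
  have hnorm : norm2D (sector α) w = norm2D halfPlane v := by
    rw [norm2D_congr_set (measurableSet_sector α) hface hinter, norm2D_reflected]
  have henergy : energy2D (sector α) (σ * cos (α / 2)) (σ * sin (α / 2)) b τ w =
      energy2D halfPlane (-σ) 0 (-b) τ v := by
    rw [energy2D_congr_set (measurableSet_sector α) hface hinter,
      ← energy2D_reflected hv.differentiable]
    congr 1 <;> ring
  refine ⟨τ, bandFn_lt_of_energy2D_lt (hv.reflected (α / 2) (-b)) ?_ ?_⟩
  · exact hvpos.trans_eq hnorm.symm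
  · exact henergy.trans_lt (hvlt.trans_eq (by rw [hnorm]))

end UpperBound

section Localization

lemma exists_abs_deriv_smoothTransition_le : ∃ M, ∀ y, |deriv smoothTransition y| ≤ M := by
  have hcont : Continuous (deriv smoothTransition) :=
    smoothTransition.contDiff.continuous_deriv (n := 1) le_rfl
  have hcompact : HasCompactSupport (deriv smoothTransition) :=
    .intro (isCompact_Icc (a := 0) (b := 1)) fun y hy ↦ by
      rcases le_or_gt y 0 with h0 | h0
      · refine IsLocalMin.deriv_eq_zero (Eventually.of_forall fun z ↦ ?_)
        rw [smoothTransition.zero_of_nonpos h0]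
        exact smoothTransition.nonneg z
      · refine IsLocalMax.deriv_eq_zero (Eventually.of_forall fun z ↦ ?_)
        rw [smoothTransition.one_of_one_le (le_of_not_ge fun h1 ↦ hy ⟨h0.le, h1⟩)]
        exact smoothTransition.le_one z
  exact hcont.bounded_above_of_compact_support hcompact

variable {E : Type*} [NormedAddCommGroup E] [NormedSpace ℝ E] {ℓ : E →L[ℝ] ℝ} {R : ℝ} {x : E}

/-- A smooth angle growing from `0` where `ℓ ≤ R` to `π / 2` where `2 R ≤ ℓ`; its cosine and sine
are the partition of unity of the IMS localization. -/
def localizationAngle (ℓ : E →L[ℝ] ℝ) (R : ℝ) (x : E) : ℝ :=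
  π / 2 * smoothTransition (ℓ x / R - 1)

lemma contDiff_localizationAngle (ℓ : E →L[ℝ] ℝ) (R : ℝ) :
    ContDiff ℝ (⊤ : ℕ∞) (localizationAngle ℓ R) :=
  contDiff_const.mul (smoothTransition.contDiff.comp (by fun_prop))

lemma localizationAngle_of_le (hR : 0 < R) (h : ℓ x ≤ R) : localizationAngle ℓ R x = 0 := by
  rw [localizationAngle, smoothTransition.zero_of_nonpos (sub_nonpos.2 ((div_le_one hR).2 h)),
    mul_zero]

lemma localizationAngle_of_two_mul_le (hR : 0 < R) (h : 2 * R ≤ ℓ x) :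
    localizationAngle ℓ R x = π / 2 := by
  have h' : 1 ≤ ℓ x / R - 1 := by
    rw [le_sub_iff_add_le, one_add_one_eq_two]
    exact (le_div_iff₀ hR).2 h
  rw [localizationAngle, smoothTransition.one_of_one_le h', mul_one]

lemma fderiv_localizationAngle_apply (ℓ : E →L[ℝ] ℝ) (R : ℝ) (x v : E) :
    fderiv ℝ (localizationAngle ℓ R) x v =
      π / 2 * deriv smoothTransition (ℓ x / R - 1) * (ℓ v / R) := by
  have hst : HasDerivAt smoothTransition _ (ℓ x / R - 1) :=
    (smoothTransition.contDiff.differentiable one_ne_zero _).hasDerivAt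
  have hℓ : HasFDerivAt (fun y ↦ ℓ y / R - 1) (R⁻¹ • ℓ) x := by
    simpa only [div_eq_inv_mul] using (ℓ.hasFDerivAt.const_mul R⁻¹).sub_const 1
  have h : HasFDerivAt (localizationAngle ℓ R) _ x := (hst.comp_hasFDerivAt x hℓ).const_mul (π / 2)
  rw [h.fderiv]
  simp only [smul_apply, smul_eq_mul]
  ring

end Localization

section PlanarLocalization

variable {b1 b2 b3 τ : ℝ} {u : ℝ × ℝ → ℂ} {θ : ℝ × ℝ → ℝ}

lemma norm2D_cos_mul_add_norm2D_sin_mul (hθ : ContDiff ℝ (⊤ : ℕ∞) θ) (hu : IsTestFunction u)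
    (Ω : Set (ℝ × ℝ)) :
    norm2D Ω (fun x ↦ (cos (θ x) : ℝ) * u x) + norm2D Ω (fun x ↦ (sin (θ x) : ℝ) * u x) =
      norm2D Ω u := by
  unfold norm2D
  rw [← integral_add (hu.ofReal_mul hθ.cos).norm_sq.integrable.integrableOn
    (hu.ofReal_mul hθ.sin).norm_sq.integrable.integrableOn]
  congr 1 with x
  simp only [norm_mul, Complex.norm_real, mul_pow, norm_eq_abs, sq_abs, ← add_mul,
    cos_sq_add_sin_sq, one_mul]

lemma energy2D_cos_mul_add_energy2D_sin_mul_le (hθ : ContDiff ℝ (⊤ : ℕ∞) θ)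
    (hu : IsTestFunction u) {ε : ℝ}
    (hε : ∀ x, fderiv ℝ θ x (1, 0) ^ 2 + fderiv ℝ θ x (0, 1) ^ 2 ≤ ε) (Ω : Set (ℝ × ℝ))
    (b1 b2 b3 τ : ℝ) :
    energy2D Ω b1 b2 b3 τ (fun x ↦ (cos (θ x) : ℝ) * u x) +
        energy2D Ω b1 b2 b3 τ (fun x ↦ (sin (θ x) : ℝ) * u x) ≤
      energy2D Ω b1 b2 b3 τ u + ε * norm2D Ω u := by
  have hcos := (hu.ofReal_mul hθ.cos).integrable_energyDensity b1 b2 b3 τ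
  have hsin := (hu.ofReal_mul hθ.sin).integrable_energyDensity b1 b2 b3 τ
  have hdens := hu.integrable_energyDensity b1 b2 b3 τ
  have hnorm : Integrable fun x ↦ ε * ‖u x‖ ^ 2 := hu.norm_sq.integrable.const_mul ε
  simp only [energy2D_eq_setIntegral_energyDensity, norm2D]
  rw [← integral_add hcos.integrableOn hsin.integrableOn, ← integral_const_mul,
    ← integral_add hdens.integrableOn hnorm.integrableOn]
  refine integral_mono (hcos.add hsin).integrableOn (hdens.add hnorm).integrableOn fun x ↦ ?_
  have hθx : DifferentiableAt ℝ θ x := hθ.differentiable (by simp) x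
  have hims (v : ℝ × ℝ) := norm_magGrad_cos_sq_add_norm_magGrad_sin_sq (A := planarPotential b3) hθx
    (hu.differentiable x) v
  have herr := mul_le_mul_of_nonneg_right (hε x) (sq_nonneg ‖u x‖)
  simp only [energyDensity, norm_mul, Complex.norm_real, mul_pow, norm_eq_abs, sq_abs]
  linear_combination herr + hims (1, 0) + hims (0, 1) +
    (x.1 * b2 - x.2 * b1 - τ) ^ 2 * ‖u x‖ ^ 2 * cos_sq_add_sin_sq (θ x)

lemma mul_norm2D_le_energy2D_of_le_sq (hu : IsTestFunction u) {c : ℝ}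
    (h : ∀ x, u x ≠ 0 → c ≤ (x.1 * b2 - x.2 * b1 - τ) ^ 2) (Ω : Set (ℝ × ℝ)) (b3 : ℝ) :
    c * norm2D Ω u ≤ energy2D Ω b1 b2 b3 τ u := by
  rw [energy2D_eq_setIntegral_energyDensity, norm2D, ← integral_const_mul]
  refine integral_mono (hu.norm_sq.integrable.const_mul c).integrableOn
    (hu.integrable_energyDensity b1 b2 b3 τ).integrableOn fun x ↦ ?_
  have hpot : c * ‖u x‖ ^ 2 ≤ (x.1 * b2 - x.2 * b1 - τ) ^ 2 * ‖u x‖ ^ 2 := by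
    by_cases hx : u x = 0
    · simp [hx]
    · exact mul_le_mul_of_nonneg_right (h x hx) (sq_nonneg _)
  exact hpot.trans (le_add_of_nonneg_left (by positivity))

end PlanarLocalization

section LowerBound

variable {α σ b τ c : ℝ} {u : ℝ × ℝ → ℂ}

/-- The half-plane bound of `mul_norm2D_halfPlane_le_energy2D` for the field
`(σ cos (α / 2), σ sin (α / 2), b)` at the lower face of the sector `S_α`, to which the field is
inclined by `σ sin α`. -/
def lowerFaceBound (α σ : ℝ) : ℝ := (1 - (σ * sin α) ^ 2) * Theta0 + (σ * sin α) ^ 2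

lemma Theta0_lt_lowerFaceBound (hα : α ∈ Ioo 0 π) (hσ : 0 < σ) : Theta0 < lowerFaceBound α σ := by
  have hpos : 0 < (σ * sin α) ^ 2 := by
    have := sin_pos_of_mem_Ioo hα
    positivity
  rw [lowerFaceBound]
  linear_combination mul_pos hpos (sub_pos.2 Theta0_lt_one)

lemma lowerFaceBound_mul_norm2D_le (hα : α ∈ Ioo 0 π) (h : σ ^ 2 + b ^ 2 = 1)
    (hu : IsTestFunction u) (hsupp : tsupport u ⊆ planarReflection (α / 2) ⁻¹' halfPlane) (τ : ℝ) :
    lowerFaceBound α σ * norm2D (sector α) u ≤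
      energy2D (sector α) (σ * cos (α / 2)) (σ * sin (α / 2)) b τ u := by
  have hinter : sector α ∩ tsupport u =
      planarReflection (π - α / 2) ⁻¹' halfPlane ∩ tsupport u := by
    rw [sector_eq_inter hα, inter_right_comm, inter_eq_right.2 hsupp, inter_comm]
  have hunit : (σ * cos (α / 2)) ^ 2 + (σ * sin (α / 2)) ^ 2 + b ^ 2 = 1 := by
    linear_combination h + σ ^ 2 * cos_sq_add_sin_sq (α / 2)
  have hincl : (cos (π - α / 2) * (σ * sin (α / 2)) - sin (π - α / 2) * (σ * cos (α / 2))) ^ 2 =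
      (σ * sin α) ^ 2 := by
    rw [cos_pi_sub, sin_pi_sub, show α = 2 * (α / 2) by ring, sin_two_mul]
    ring_nf
  have key := mul_norm2D_le_energy2D_of_inter_eq (measurableSet_sector α) hu hinter hunit τ
  rwa [hincl] at key

/-- The distance from the line carrying the upper face of the sector `S_α`, positive inside. -/
def distUpperFace (α : ℝ) : ℝ × ℝ →L[ℝ] ℝ :=
  (ContinuousLinearMap.snd ℝ ℝ ℝ).comp (planarReflection (α / 2) : ℝ × ℝ →L[ℝ] ℝ × ℝ)

lemma distUpperFace_apply (α : ℝ) (x : ℝ × ℝ) :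
    distUpperFace α x = sin (α / 2) * x.1 - cos (α / 2) * x.2 := by
  simp [distUpperFace, planarReflection_apply]

lemma distUpperFace_nonneg (hα : α ∈ Ioo 0 π) {x : ℝ × ℝ} (hx : x ∈ sector α) :
    0 ≤ distUpperFace α x := by
  rw [sector_eq_inter hα] at hx
  exact hx.1

lemma potential_eq_mul_distUpperFace (α σ : ℝ) (x : ℝ × ℝ) :
    x.1 * (σ * sin (α / 2)) - x.2 * (σ * cos (α / 2)) = σ * distUpperFace α x := by
  rw [distUpperFace_apply]
  ring

lemma sq_fderiv_localizationAngle_distUpperFace_le {M : ℝ}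
    (hM : ∀ y, |deriv smoothTransition y| ≤ M) (α R : ℝ) (x : ℝ × ℝ) :
    fderiv ℝ (localizationAngle (distUpperFace α) R) x (1, 0) ^ 2 +
      fderiv ℝ (localizationAngle (distUpperFace α) R) x (0, 1) ^ 2 ≤ (π / 2 * M / R) ^ 2 := by
  simp only [fderiv_localizationAngle_apply, distUpperFace_apply]
  set g := deriv smoothTransition ((sin (α / 2) * x.1 - cos (α / 2) * x.2) / R - 1)
  have hg : g ^ 2 ≤ M ^ 2 := by
    rw [← sq_abs g]
    exact pow_le_pow_left₀ (abs_nonneg g) (hM _) 2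
  linear_combination (π / 2 / R) ^ 2 * hg + (π / 2 * g / R) ^ 2 * cos_sq_add_sin_sq (α / 2)

/-- Where `distUpperFace α x < 2 R = τ / (2 σ)` the potential is at least `(τ / 2)²`. -/
lemma sq_div_four_mul_norm2D_cos_mul_le (hσ : 0 < σ) (hτ : 0 < τ) (hu : IsTestFunction u)
    (Ω : Set (ℝ × ℝ)) :
    τ ^ 2 / 4 * norm2D Ω
        (fun x ↦ (cos (localizationAngle (distUpperFace α) (τ / (4 * σ)) x) : ℝ) * u x) ≤
      energy2D Ω (σ * cos (α / 2)) (σ * sin (α / 2)) b τ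
        (fun x ↦ (cos (localizationAngle (distUpperFace α) (τ / (4 * σ)) x) : ℝ) * u x) := by
  have hR : 0 < τ / (4 * σ) := by positivity
  refine mul_norm2D_le_energy2D_of_le_sq
    (hu.ofReal_mul (contDiff_localizationAngle _ _).cos) (fun x hx ↦ ?_) Ω b
  rw [potential_eq_mul_distUpperFace]
  have hlt : distUpperFace α x < 2 * (τ / (4 * σ)) := by
    by_contra! hge
    simp [localizationAngle_of_two_mul_le hR hge] at hx
  have hle : σ * distUpperFace α x ≤ τ / 2 := by
    calc σ * distUpperFace α x ≤ σ * (2 * (τ / (4 * σ))) := by gcongr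
      _ = τ / 2 := by field_simp; norm_num
  nlinarith

lemma tsupport_sin_mul_subset {R : ℝ} (hR : 0 < R) (u : ℝ × ℝ → ℂ) :
    tsupport (fun x ↦ ((sin (localizationAngle (distUpperFace α) R x) : ℝ) : ℂ) * u x) ⊆
      planarReflection (α / 2) ⁻¹' halfPlane := by
  refine closure_minimal (fun x hx ↦ ?_)
    ((isClosed_le continuous_const continuous_snd).preimage (planarReflection (α / 2)).continuous)
  by_contra hneg
  have hle : distUpperFace α x ≤ R := (lt_of_not_ge hneg).le.trans hR.le
  simp [localizationAngle_of_le hR hle] at hx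

lemma lowerFaceBound_sub_le_bandFn (hα : α ∈ Ioo 0 π) (h : σ ^ 2 + b ^ 2 = 1) (hσ : 0 < σ)
    {M : ℝ} (hM : ∀ y, |deriv smoothTransition y| ≤ M) (hτ : 0 < τ)
    (hτσ : lowerFaceBound α σ ≤ τ ^ 2 / 4) :
    lowerFaceBound α σ - (2 * π * M * σ / τ) ^ 2 ≤
      bandFn α (σ * cos (α / 2)) (σ * sin (α / 2)) b τ := by
  refine le_bandFn hα fun u hu ↦ ?_
  have hθ := contDiff_localizationAngle (distUpperFace α) (τ / (4 * σ))
  have hcos := (mul_le_mul_of_nonneg_right hτσ norm2D_nonneg).trans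
    (sq_div_four_mul_norm2D_cos_mul_le (α := α) (b := b) hσ hτ hu (sector α))
  have hsin := lowerFaceBound_mul_norm2D_le hα h (hu.ofReal_mul hθ.sin)
    (tsupport_sin_mul_subset (by positivity) u) τ
  have henergy := energy2D_cos_mul_add_energy2D_sin_mul_le hθ hu
    (sq_fderiv_localizationAngle_distUpperFace_le hM α (τ / (4 * σ))) (sector α)
    (σ * cos (α / 2)) (σ * sin (α / 2)) b τ
  have hnorm := norm2D_cos_mul_add_norm2D_sin_mul hθ hu (sector α)
  have herr : π / 2 * M / (τ / (4 * σ)) = 2 * π * M * σ / τ := by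
    field_simp
    ring
  rw [herr] at henergy
  linear_combination hcos + hsin + henergy - lowerFaceBound α σ * hnorm

lemma eventually_le_bandFn (hα : α ∈ Ioo 0 π) (h : σ ^ 2 + b ^ 2 = 1) (hσ : 0 < σ)
    (hc : c < lowerFaceBound α σ) :
    ∀ᶠ τ in atTop, c ≤ bandFn α (σ * cos (α / 2)) (σ * sin (α / 2)) b τ := by
  obtain ⟨M, hM⟩ := exists_abs_deriv_smoothTransition_le
  have herr : Tendsto (fun τ ↦ lowerFaceBound α σ - (2 * π * M * σ / τ) ^ 2) atTop
      (nhds (lowerFaceBound α σ)) := by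
    simpa using ((tendsto_id.const_div_atTop (2 * π * M * σ)).pow 2).const_sub (lowerFaceBound α σ)
  have hquad : ∀ᶠ τ : ℝ in atTop, lowerFaceBound α σ ≤ τ ^ 2 / 4 :=
    ((tendsto_pow_atTop two_ne_zero).atTop_div_const four_pos).eventually_ge_atTop _
  filter_upwards [herr.eventually_const_le hc, hquad, eventually_gt_atTop 0] with τ hcτ hτσ hτ
  exact hcτ.trans (lowerFaceBound_sub_le_bandFn hα h hσ hM hτ hτσ)

end LowerBound

section Minimum

variable {α σ b : ℝ}

lemma exists_forall_bandFn_le_of_pos (hα : α ∈ Ioo 0 π) (h : σ ^ 2 + b ^ 2 = 1) (hσ : 0 < σ) :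
    ∃ τs, ∀ τ, bandFn α (σ * cos (α / 2)) (σ * sin (α / 2)) b τs ≤
      bandFn α (σ * cos (α / 2)) (σ * sin (α / 2)) b τ := by
  obtain ⟨c, hΘc, hc⟩ := exists_between (Theta0_lt_lowerFaceBound hα hσ)
  obtain ⟨τ₀, hτ₀⟩ := exists_bandFn_lt hα h hΘc
  have htop := eventually_le_bandFn hα h hσ hc
  have hpot : ∀ x ∈ sector α, 0 ≤ x.1 * (σ * sin (α / 2)) - x.2 * (σ * cos (α / 2)) :=
    fun x hx ↦ (mul_nonneg hσ.le (distUpperFace_nonneg hα hx)).trans_eq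
      (potential_eq_mul_distUpperFace α σ x).symm
  have hbot : ∀ᶠ τ in atBot, c ≤ bandFn α (σ * cos (α / 2)) (σ * sin (α / 2)) b τ := by
    have hsq : Tendsto (fun τ : ℝ ↦ τ ^ 2) atBot atTop := by
      simpa only [sq, id] using tendsto_id.atBot_mul_atBot₀ tendsto_id
    filter_upwards [hsq.eventually_ge_atTop c, eventually_le_atBot 0] with τ hcτ hτ
    exact hcτ.trans (sq_le_bandFn hα hpot hτ)
  refine (continuous_bandFn hα _ _ b).exists_forall_le' τ₀ ?_
  rw [cocompact_eq_atBot_atTop]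
  exact (eventually_sup.2 ⟨hbot, htop⟩).mono fun τ hτ ↦ hτ₀.le.trans hτ

lemma exists_forall_bandFn_le (hα : α ∈ Ioo 0 π) (h : σ ^ 2 + b ^ 2 = 1) :
    ∃ τs, ∀ τ, bandFn α (σ * cos (α / 2)) (σ * sin (α / 2)) b τs ≤
      bandFn α (σ * cos (α / 2)) (σ * sin (α / 2)) b τ := by
  rcases lt_trichotomy σ 0 with hσ | rfl | hσ
  · obtain ⟨τs, hτs⟩ := exists_forall_bandFn_le_of_pos (b := b) hα (by rwa [neg_sq]) (neg_pos.2 hσ)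
    refine ⟨-τs, fun τ ↦ ?_⟩
    have key := hτs (-τ)
    simp only [neg_mul, bandFn_neg_neg_neg] at key
    rwa [← bandFn_neg_neg_neg, neg_neg]
  · simpa only [zero_mul] using ⟨0, bandFn_zero_le_of_axial_field hα b⟩
  · exact exists_forall_bandFn_le_of_pos hα h hσ

end Minimum

end MagWedge

open MagWedge in
theorem bandFn_attains_inf_general (α γ : ℝ) (hα : α ∈ Ioo 0 π) :
    ∃ τs : ℝ,
      bandFn α (sin γ * cos (α / 2)) (sin γ * sin (α / 2)) (cos γ) τs
        = ⨅ τ : ℝ, bandFn α (sin γ * cos (α / 2)) (sin γ * sin (α / 2)) (cos γ) τ := by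
  obtain ⟨τs, hτs⟩ := exists_forall_bandFn_le hα (sin_sq_add_cos_sq γ)
  have hbdd : BddBelow (range fun τ ↦
      bandFn α (sin γ * cos (α / 2)) (sin γ * sin (α / 2)) (cos γ) τ) :=
    ⟨0, forall_mem_range.2 fun _ ↦ bandFn_nonneg hα⟩
  exact ⟨τs, le_antisymm (le_ciInf hτs) (ciInf_le hbdd τs)⟩

open MagWedge in
/-- the band function attains its infimum. -/
theorem bandFn_attains_inf (α γ : ℝ) (hα : α ∈ Set.Ioo 0 π) (hγ : γ ∈ Set.Icc 0 (π / 2)) :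
    ∃ τs : ℝ,
      bandFn α (Real.sin γ * Real.cos (α / 2)) (Real.sin γ * Real.sin (α / 2)) (Real.cos γ) τs
        = ⨅ τ : ℝ, bandFn α
            (Real.sin γ * Real.cos (α / 2)) (Real.sin γ * Real.sin (α / 2)) (Real.cos γ) τ :=
  bandFn_attains_inf_general α γ hα
end
end

section
/- Let α ∈ (0,π), (b₁,b₂,b₃) ∈ ℝ³, and let f : [0,∞) → ℂ be smooth and compactly supported. Define u(ρ,η) := f(ρ) on Ω₀ := (0,∞) × (−1/2,1/2). Then ∫_{Ω₀} ( |∂_ρ u − i·α·ρ·η·b₃·u|² + (1/(α²ρ²))·|∂_η u|² + (ρ·cos(ηα)·b₂ − ρ·sin(ηα)·b₁)²·|u|² )·ρ dρ dη = ∫₀^∞ |f′(ρ)|²·ρ dρ + ( b₂² + (α²/12)·b₃² + (1/2)·(1 − sinc α)·(b₁² − b₂²) )·∫₀^∞ ρ²·|f(ρ)|²·ρ dρ, where sinc α := (sin α)/α. -/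
open Real MeasureTheory Set Filter

noncomputable section

/-!
The angular derivative of `u(ρ, η) = f(ρ)` vanishes, and expanding the squared modulus of the radial
term gives `|f'|² - 2αη b₃ ρ ⟪f', i f⟫ + (αη b₃)² ρ² |f|²`. Every term is a function of `ρ` times a
function of `η`, so the double integral factors. The cross term is odd in `η` and drops out; the
coefficient of `∫ ρ² |f|² ρ dρ` is the mean over `η` of `(αη b₃)²` plus the electric potential on
the unit circle, an elementary trigonometric integral.
-/

namespace MagWedge

open scoped RealInnerProductSpace

/-- The integrand, with respect to `dρ dη`, of the quadratic form `Q^pol` in the coordinates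
`(ρ, η) = (x.1, x.2)`, including the weight `ρ` of the polar volume element. -/
def polarDensity (α b1 b2 b3 : ℝ) (u : ℝ × ℝ → ℂ) (x : ℝ × ℝ) : ℝ :=
  (‖fderiv ℝ u x (1, 0) - Complex.I * ((α * x.1 * x.2 * b3 : ℝ) : ℂ) * u x‖ ^ 2
    + 1 / (α ^ 2 * x.1 ^ 2) * ‖fderiv ℝ u x (0, 1)‖ ^ 2
    + (x.1 * Real.cos (x.2 * α) * b2 - x.1 * Real.sin (x.2 * α) * b1) ^ 2 * ‖u x‖ ^ 2) * x.1

/-- The effective potential, at radius one and normalized angle `η`, seen by a radial function: the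
square of the magnetic potential plus the electric potential `V^pol(1, η)`. -/
def angularPotential (α b1 b2 b3 η : ℝ) : ℝ :=
  (α * b3) ^ 2 * η ^ 2 + (Real.cos (η * α) * b2 - Real.sin (η * α) * b1) ^ 2

theorem continuous_angularPotential (α b1 b2 b3 : ℝ) :
    Continuous (angularPotential α b1 b2 b3) := by
  unfold angularPotential
  fun_prop

theorem integral_Ioo_eq_intervalIntegral {E : Type*} [NormedAddCommGroup E] [NormedSpace ℝ E]
    {μ : Measure ℝ} [NullSingletonClass μ] {a b : ℝ} (hab : a ≤ b) (g : ℝ → E) :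
    ∫ x in Ioo a b, g x ∂μ = ∫ x in a..b, g x ∂μ := by
  rw [intervalIntegral.integral_of_le hab, integral_Ioc_eq_integral_Ioo]

theorem integral_cos_mul_sub_sin_mul_sq (a b c : ℝ) :
    ∫ θ in -a..a, (Real.cos θ * b - Real.sin θ * c) ^ 2
      = a * (b ^ 2 + c ^ 2) + Real.sin (2 * a) / 2 * (b ^ 2 - c ^ 2) := by
  have expand : ∀ θ : ℝ, (Real.cos θ * b - Real.sin θ * c) ^ 2
      = b ^ 2 * Real.cos θ ^ 2 + c ^ 2 * Real.sin θ ^ 2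
        - 2 * b * c * (Real.sin θ * Real.cos θ) := fun θ ↦ by ring
  simp_rw [expand]
  rw [intervalIntegral.integral_sub, intervalIntegral.integral_add]
  · simp only [intervalIntegral.integral_const_mul, integral_cos_sq, integral_sin_sq,
      integral_sin_mul_cos₁, Real.sin_neg, Real.cos_neg, Real.sin_two_mul]
    ring
  all_goals exact Continuous.intervalIntegrable (by fun_prop) _ _

theorem integral_angularPotential {α : ℝ} (hα : α ≠ 0) (b1 b2 b3 : ℝ) :
    ∫ η in (-(1 : ℝ) / 2)..(1 / 2), angularPotential α b1 b2 b3 η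
      = b2 ^ 2 + α ^ 2 / 12 * b3 ^ 2
        + 1 / 2 * (1 - Real.sin α / α) * (b1 ^ 2 - b2 ^ 2) := by
  have electric : ∫ η in (-(1 : ℝ) / 2)..(1 / 2),
      (Real.cos (η * α) * b2 - Real.sin (η * α) * b1) ^ 2
        = α⁻¹ * (α / 2 * (b2 ^ 2 + b1 ^ 2) + Real.sin α / 2 * (b2 ^ 2 - b1 ^ 2)) := by
    rw [intervalIntegral.integral_comp_mul_right
        (fun θ ↦ (Real.cos θ * b2 - Real.sin θ * b1) ^ 2) hα,
      show -(1 : ℝ) / 2 * α = -(α / 2) by ring, show 1 / 2 * α = α / 2 by ring,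
      integral_cos_mul_sub_sin_mul_sq, mul_div_cancel₀ α two_ne_zero, smul_eq_mul]
  unfold angularPotential
  rw [intervalIntegral.integral_add
      (Continuous.intervalIntegrable (by fun_prop) _ _)
      (Continuous.intervalIntegrable (by fun_prop) _ _),
    intervalIntegral.integral_const_mul, integral_pow, electric]
  field_simp
  ring

theorem fderiv_comp_fst_apply {𝕜 E F G : Type*} [NontriviallyNormedField 𝕜]
    [NormedAddCommGroup E] [NormedSpace 𝕜 E] [NormedAddCommGroup F] [NormedSpace 𝕜 F]
    [NormedAddCommGroup G] [NormedSpace 𝕜 G] {f : E → G} {x : E × F}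
    (hf : DifferentiableAt 𝕜 f x.1) (v : E × F) :
    fderiv 𝕜 (fun p : E × F ↦ f p.1) x v = fderiv 𝕜 f x.1 v.1 := by
  have h : HasFDerivAt (fun p : E × F ↦ f p.1) _ x := hf.hasFDerivAt.comp x hasFDerivAt_fst
  rw [h.fderiv, ContinuousLinearMap.comp_apply, ContinuousLinearMap.coe_fst']

theorem norm_sub_I_mul_ofReal_mul_sq (z w : ℂ) (t : ℝ) :
    ‖z - Complex.I * (t : ℂ) * w‖ ^ 2
      = ‖z‖ ^ 2 - 2 * t * ⟪z, Complex.I * w⟫ + t ^ 2 * ‖w‖ ^ 2 := by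
  rw [show Complex.I * (t : ℂ) * w = t • (Complex.I * w) by rw [Complex.real_smul]; ring,
    norm_sub_sq_real, real_inner_smul_right, norm_smul, norm_mul, Complex.norm_I, one_mul, mul_pow,
    Real.norm_eq_abs, sq_abs, mul_assoc]

-- Each summand is a function of `ρ` times a function of `η`, whence the factor `1`.
theorem polarDensity_radial (α b1 b2 b3 : ℝ) {f : ℝ → ℂ} {x : ℝ × ℝ}
    (hf : DifferentiableAt ℝ f x.1) :
    polarDensity α b1 b2 b3 (fun p ↦ f p.1) x
      = ‖deriv f x.1‖ ^ 2 * x.1 * 1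
        + ⟪deriv f x.1, Complex.I * f x.1⟫ * x.1 ^ 2 * (-2 * α * b3 * x.2)
        + x.1 ^ 2 * ‖f x.1‖ ^ 2 * x.1 * angularPotential α b1 b2 b3 x.2 := by
  simp only [polarDensity, angularPotential, fderiv_comp_fst_apply hf, fderiv_apply_one_eq_deriv,
    map_zero, norm_zero, norm_sub_I_mul_ofReal_mul_sq]
  ring

theorem integrable_inner_mul {X E : Type*} [MeasurableSpace X] {μ : Measure X}
    [NormedAddCommGroup E] [InnerProductSpace ℝ E] {g h : X → E} {w : X → ℝ}
    (hg : AEStronglyMeasurable g μ) (hh : AEStronglyMeasurable h μ)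
    (hw : AEStronglyMeasurable w μ) (hw₀ : 0 ≤ᵐ[μ] w)
    (hgw : Integrable (fun x ↦ ‖g x‖ ^ 2 * w x) μ)
    (hhw : Integrable (fun x ↦ ‖h x‖ ^ 2 * w x) μ) :
    Integrable (fun x ↦ ⟪g x, h x⟫ * w x) μ := by
  refine (hgw.add hhw).mono' ((hg.inner hh).mul hw) ?_
  filter_upwards [hw₀] with x (hwx : 0 ≤ w x)
  have amgm : |⟪g x, h x⟫| ≤ ‖g x‖ ^ 2 + ‖h x‖ ^ 2 := by
    linarith [abs_real_inner_le_norm (g x) (h x), two_mul_le_add_sq ‖g x‖ ‖h x‖,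
      sq_nonneg ‖g x‖, sq_nonneg ‖h x‖]
  calc ‖⟪g x, h x⟫ * w x‖ = |⟪g x, h x⟫| * w x := by
        rw [norm_mul, Real.norm_eq_abs, Real.norm_of_nonneg hwx]
    _ ≤ (‖g x‖ ^ 2 + ‖h x‖ ^ 2) * w x := by gcongr
    _ = ‖g x‖ ^ 2 * w x + ‖h x‖ ^ 2 * w x := add_mul _ _ _

theorem integrableOn_inner_deriv_I_mul {f : ℝ → ℂ} (hf : ContinuousOn f (Ioi 0))
    (hf' : IntegrableOn (fun ρ ↦ ‖deriv f ρ‖ ^ 2 * ρ) (Ioi 0))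
    (hρf : IntegrableOn (fun ρ ↦ ρ ^ 2 * ‖f ρ‖ ^ 2 * ρ) (Ioi 0)) :
    IntegrableOn (fun ρ ↦ ⟪deriv f ρ, Complex.I * f ρ⟫ * ρ ^ 2) (Ioi 0) := by
  have hIf : ContinuousOn (fun ρ : ℝ ↦ ρ • (Complex.I * f ρ)) (Ioi 0) := by fun_prop
  -- One factor of `ρ ^ 2` goes to `f`, the other is the weight of the polar volume element.
  have weighted : IntegrableOn (fun ρ ↦ ⟪deriv f ρ, ρ • (Complex.I * f ρ)⟫ * ρ) (Ioi 0) := by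
    refine integrable_inner_mul (aestronglyMeasurable_deriv f _)
      (hIf.aestronglyMeasurable measurableSet_Ioi) aestronglyMeasurable_id
      (ae_restrict_of_forall_mem measurableSet_Ioi fun ρ hρ ↦ le_of_lt hρ) hf' ?_
    simpa [IntegrableOn, norm_smul, mul_pow] using hρf
  refine weighted.congr_fun (fun ρ _ ↦ ?_) measurableSet_Ioi
  simp only [real_inner_smul_right]
  ring

theorem integrable_norm_sq_mul_of_hasCompactSupport {X E : Type*} [TopologicalSpace X]
    [MeasurableSpace X] [OpensMeasurableSpace X] [NormedAddCommGroup E] {μ : Measure X}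
    [IsFiniteMeasureOnCompacts μ] {f : X → E} {w : X → ℝ} (hf : Continuous f)
    (hsupp : HasCompactSupport f) (hw : Continuous w) :
    Integrable (fun x ↦ ‖f x‖ ^ 2 * w x) μ := by
  refine Continuous.integrable_of_hasCompactSupport (by fun_prop) (HasCompactSupport.mul_right ?_)
  exact hsupp.comp_left (g := fun z ↦ ‖z‖ ^ 2) (by simp)

theorem setIntegral_polarDensity_radial (α b1 b2 b3 : ℝ) {a b : ℝ} (hab : a ≤ b) {f : ℝ → ℂ}
    (hf : DifferentiableOn ℝ f (Ioi 0))
    (hf' : IntegrableOn (fun ρ ↦ ‖deriv f ρ‖ ^ 2 * ρ) (Ioi 0))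
    (hρf : IntegrableOn (fun ρ ↦ ρ ^ 2 * ‖f ρ‖ ^ 2 * ρ) (Ioi 0)) :
    ∫ x in Ioi (0 : ℝ) ×ˢ Ioo a b, polarDensity α b1 b2 b3 (fun p ↦ f p.1) x
      = (b - a) * (∫ ρ in Ioi (0 : ℝ), ‖deriv f ρ‖ ^ 2 * ρ)
        - α * b3 * (b ^ 2 - a ^ 2)
          * (∫ ρ in Ioi (0 : ℝ), ⟪deriv f ρ, Complex.I * f ρ⟫ * ρ ^ 2)
        + (∫ η in a..b, angularPotential α b1 b2 b3 η)
          * ∫ ρ in Ioi (0 : ℝ), ρ ^ 2 * ‖f ρ‖ ^ 2 * ρ := by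
  have interval_form (g : ℝ → ℝ) : ∫ η in Ioo a b, g η = ∫ η in a..b, g η :=
    integral_Ioo_eq_intervalIntegral hab g
  have integrable_angular {g : ℝ → ℝ} (hg : Continuous g) : IntegrableOn g (Ioo a b) :=
    hg.integrableOn_Icc.mono_set Ioo_subset_Icc_self
  have hkin := hf'.mul_prod (integrable_angular (continuous_const (y := (1 : ℝ))))
  have hcross := (integrableOn_inner_deriv_I_mul hf.continuousOn hf' hρf).mul_prod
    (integrable_angular (by fun_prop : Continuous fun η ↦ -2 * α * b3 * η))
  have hpot := hρf.mul_prod (integrable_angular (continuous_angularPotential α b1 b2 b3))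
  have separated := setIntegral_congr_fun (μ := volume)
    (measurableSet_Ioi.prod measurableSet_Ioo : MeasurableSet (Ioi (0 : ℝ) ×ˢ Ioo a b))
    fun x hx ↦ polarDensity_radial α b1 b2 b3 (hf.differentiableAt (Ioi_mem_nhds hx.1))
  rw [separated, Measure.volume_eq_prod, ← Measure.prod_restrict,
    integral_add ?_ hpot, integral_add hkin hcross,
    integral_prod_mul (fun ρ ↦ ‖deriv f ρ‖ ^ 2 * ρ) (fun _ ↦ (1 : ℝ)),
    integral_prod_mul (fun ρ ↦ ⟪deriv f ρ, Complex.I * f ρ⟫ * ρ ^ 2) (fun η ↦ -2 * α * b3 * η),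
    integral_prod_mul (fun ρ ↦ ρ ^ 2 * ‖f ρ‖ ^ 2 * ρ) (angularPotential α b1 b2 b3)]
  · rw [interval_form, interval_form, interval_form, intervalIntegral.integral_const, smul_eq_mul,
      intervalIntegral.integral_const_mul, integral_id]
    ring
  · exact hkin.add hcross

end MagWedge

open MagWedge in
theorem polar_form_radial_general {α : ℝ} (hα : α ≠ 0) (b1 b2 b3 : ℝ) {f : ℝ → ℂ}
    (hf : DifferentiableOn ℝ f (Ioi 0))
    (hf' : IntegrableOn (fun ρ ↦ ‖deriv f ρ‖ ^ 2 * ρ) (Ioi 0))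
    (hρf : IntegrableOn (fun ρ ↦ ρ ^ 2 * ‖f ρ‖ ^ 2 * ρ) (Ioi 0)) :
    ∫ x in Ioi (0 : ℝ) ×ˢ Ioo (-(1 : ℝ) / 2) (1 / 2), polarDensity α b1 b2 b3 (fun p ↦ f p.1) x
      = (∫ ρ in Ioi (0 : ℝ), ‖deriv f ρ‖ ^ 2 * ρ)
        + (b2 ^ 2 + α ^ 2 / 12 * b3 ^ 2 + 1 / 2 * (1 - Real.sin α / α) * (b1 ^ 2 - b2 ^ 2))
          * ∫ ρ in Ioi (0 : ℝ), ρ ^ 2 * ‖f ρ‖ ^ 2 * ρ := by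
  rw [setIntegral_polarDensity_radial α b1 b2 b3 (by norm_num) hf hf' hρf,
    integral_angularPotential hα]
  ring

open MagWedge in
/-- evaluation of the polar-coordinate quadratic form on radial functions
`u(ρ,η) = f(ρ)` on `Ω₀ = (0,∞) × (−1/2,1/2)`. -/
theorem polar_form_radial (α b1 b2 b3 : ℝ) (hα : α ∈ Set.Ioo 0 π) (f : ℝ → ℂ)
    (hf : ContDiff ℝ (⊤ : ℕ∞) f) (hsupp : HasCompactSupport f) :
    (∫ x in Set.Ioi (0 : ℝ) ×ˢ Set.Ioo (-(1 : ℝ) / 2) (1 / 2),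
        (‖fderiv ℝ (fun p : ℝ × ℝ => f p.1) x (1, 0)
            - Complex.I * ((α * x.1 * x.2 * b3 : ℝ) : ℂ) * f x.1‖ ^ 2
          + 1 / (α ^ 2 * x.1 ^ 2) * ‖fderiv ℝ (fun p : ℝ × ℝ => f p.1) x (0, 1)‖ ^ 2
          + (x.1 * Real.cos (x.2 * α) * b2 - x.1 * Real.sin (x.2 * α) * b1) ^ 2
            * ‖f x.1‖ ^ 2) * x.1)
      = (∫ ρ in Set.Ioi (0 : ℝ), ‖deriv f ρ‖ ^ 2 * ρ)
        + (b2 ^ 2 + α ^ 2 / 12 * b3 ^ 2 + 1 / 2 * (1 - Real.sin α / α) * (b1 ^ 2 - b2 ^ 2))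
          * ∫ ρ in Set.Ioi (0 : ℝ), ρ ^ 2 * ‖f ρ‖ ^ 2 * ρ := by
  have hdf : Integrable fun ρ ↦ ‖deriv f ρ‖ ^ 2 * ρ :=
    integrable_norm_sq_mul_of_hasCompactSupport (hf.continuous_deriv (by simp)) hsupp.deriv
      continuous_id
  have hρf : Integrable fun ρ ↦ ‖f ρ‖ ^ 2 * (ρ ^ 2 * ρ) :=
    integrable_norm_sq_mul_of_hasCompactSupport hf.continuous hsupp (by fun_prop)
  exact polar_form_radial_general hα.1.ne' b1 b2 b3 (hf.differentiable (by simp)).differentiableOn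
    hdf.integrableOn (by simpa only [mul_left_comm, mul_assoc] using hρf.integrableOn)
end
end
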